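/- There exists an absolute constant c ≥ 1 such that for every dimension d ≥ 2, all convex bodies G, K ⊆ ℝ^d with G ⊆ int(K), and every α with 0 < α ≤ 1, with G₊ := {x ∈ int(K) : inf_{g∈G} d_H^K(x,g) ≤ α} the Hilbert α-expansion of G in K, one has c^{−d} · vol_H^K(G) / (ω_d · α^d) ≤ N_K(G, α) ≤ c^{d} · vol_H^K(G₊) / (ω_d · α^d), where N_K(·,·) is the Hilbert covering number and vol_H^K is the Hilbert Holmes–Thompson volume. -/

import Mathlib

open Set MeasureTheory Metric
open scoped Pointwise RealInnerProductSpace ENNReal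

noncomputable section

abbrev Euc (d : ℕ) := EuclideanSpace ℝ (Fin d)

/-- A convex body: a compact convex set with nonempty interior. -/
def IsConvexBody {d : ℕ} (K : Set (Euc d)) : Prop :=
  IsCompact K ∧ Convex ℝ K ∧ (interior K).Nonempty

/-- The polar of a set. -/
def polarSet {d : ℕ} (S : Set (Euc d)) : Set (Euc d) :=
  {y | ∀ x ∈ S, ⟪x, y⟫ ≤ 1}

/-- The Hilbert distance with respect to the body `K`. -/
def hilbertDist {d : ℕ} (K : Set (Euc d)) (x y : Euc d) : ℝ :=
  -(1 / 2) * Real.log ((1 - gauge ((fun k => k - x) '' K) (y - x)) *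
    (1 - gauge ((fun k => k - y) '' K) (x - y)))

/-- The Hilbert ball of radius `r` centered at `x`. -/
def hilbertBall {d : ℕ} (K : Set (Euc d)) (x : Euc d) (r : ℝ) : Set (Euc d) :=
  {y ∈ interior K | hilbertDist K x y ≤ r}

/-- The Hilbert covering number of `U` at scale `α` in the geometry induced by `K`. -/
def hilbertCov {d : ℕ} (K U : Set (Euc d)) (α : ℝ) : ℕ :=
  sInf {m : ℕ | ∃ x : Fin m → Euc d, (∀ i, x i ∈ interior K) ∧
    U ⊆ ⋃ i, hilbertBall K (x i) α}

/-- The translative covering number of `U` by translates of `α • D`. -/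
def transCov {d : ℕ} (D U : Set (Euc d)) (α : ℝ) : ℕ :=
  sInf {m : ℕ | ∃ x : Fin m → Euc d, U ⊆ ⋃ i, x i +ᵥ α • D}

/-- The Hilbert `α`-expansion of `G` in `K`. -/
def hilbertExpand {d : ℕ} (K G : Set (Euc d)) (α : ℝ) : Set (Euc d) :=
  {x ∈ interior K | sInf (hilbertDist K x '' G) ≤ α}

/-- The Lebesgue volume of the Euclidean unit ball in `ℝ^d`. -/
def ωd (d : ℕ) : ℝ := (volume (ball (0 : Euc d) 1)).toReal

/-- The Hilbert Finsler unit ball at `y` in the geometry induced by `K`. -/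
def finslerBall {d : ℕ} (K : Set (Euc d)) (y : Euc d) : Set (Euc d) :=
  {v | gauge ((fun k => k - y) '' K) v + gauge ((fun k => k - y) '' K) (-v) ≤ 2}

/-- The Hilbert Holmes–Thompson volume of `U` in the geometry induced by `K`. -/
def volH {d : ℕ} (K U : Set (Euc d)) : ℝ :=
  (1 / ωd d) * ∫ y in U, (volume (polarSet (finslerBall K y))).toReal

/-- The recentered Macbeath region `A(x) := (K ∩ (2x − K)) − x`. -/
def macbeathA {d : ℕ} (K : Set (Euc d)) (x : Euc d) : Set (Euc d) :=
  (fun k => k - x) '' (K ∩ ((fun k => (2 : ℝ) • x - k) '' K))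

/-
Up to the factor `ω_d⁻¹` the Holmes–Thompson density at `y` is the volume of the polar of the
Finsler ball at `y`. Weak forms of the Santaló and Bourgain–Milman inequalities say that it is
`ω_d ^ 2` divided by the volume of that ball, up to a factor `c ^ d`. A Hilbert ball of radius
`α ≤ 1` is comparable to the translated Finsler ball scaled by `α`, and the density varies on it by
at most `c ^ d`; hence every Hilbert ball of radius `α` has Holmes–Thompson volume `ω_d α ^ d` up to
`c ^ d`. The two bounds follow by summing over a cover and over a maximal separated set.

Santaló: the gradient of the log-Laplace transform `x ↦ log ∫_K exp ⟪x, v⟫ dv` maps `E` injectively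
into `K`, and its derivative is the covariance matrix of the tilted measure. At the points of
`d • K°` this matrix has determinant bounded below, so the change of variables bounds `vol K°` in
terms of `vol K`.

Bourgain–Milman: let `g` be the gradient of the log-Laplace transform of `K°`, and let `u + i v` be
the perturbation `(x, x') ↦ (g x - i g x', g x' + i g x) / 2` of the identity of `E × E`. The
integral of the Gaussian pulled back by `id + u + z v` does not depend on `z`: for real `z` and a
small perturbation this is a change of variables, and analytic continuation does the rest. At
`z = i` the terms quadratic in `g` cancel, the Jacobian is `det (1 + (Dg x + Dg x') / 2)`, and in
the variables `x + x'` and `(x + g x) - (x' + g x')` the integrand is dominated by a product of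
exponentials of the gauges of `K` and `K°`. The integral is `(2π) ^ d`, so `vol K * vol K°` is
bounded below.
-/

section LogLaplace

lemma continuous_innerSL_smulRight {E F : Type*} [NormedAddCommGroup E] [InnerProductSpace ℝ E]
    [NormedAddCommGroup F] [NormedSpace ℝ F] {f : E → F} {g : E → E} (hf : Continuous f)
    (hg : Continuous g) : Continuous fun y => (innerSL ℝ (g y)).smulRight (f y) :=
  ((ContinuousLinearMap.smulRightL ℝ E F).continuous.comp
    ((innerSL ℝ).continuous.comp hg)).clm_apply hf

lemma integral_innerSL_smulRight {α E F : Type*} [MeasurableSpace α] {μ : Measure α}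
    [NormedAddCommGroup E] [InnerProductSpace ℝ E] [NormedAddCommGroup F] [NormedSpace ℝ F]
    [CompleteSpace F] {f : α → F} (hf : Integrable f μ) (v : E) :
    ∫ a, (innerSL ℝ v).smulRight (f a) ∂μ = (innerSL ℝ v).smulRight (∫ a, f a ∂μ) :=
  (ContinuousLinearMap.smulRightL ℝ E F (innerSL ℝ v)).integral_comp_comm hf

variable {E : Type*} [NormedAddCommGroup E] [InnerProductSpace ℝ E] [FiniteDimensional ℝ E]
  [MeasurableSpace E] [BorelSpace E] {L : Set E}

/-- The Laplace transform `x ↦ ∫_L e^⟪x,y⟫ dy` of a set `L`. -/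
def laplaceInt (L : Set E) (x : E) : ℝ := ∫ y in L, Real.exp ⟪x, y⟫

/-- The probability measure on `L` with density proportional to `e^⟪x,y⟫`. -/
def expTilt (L : Set E) (x : E) : Measure E := (volume.restrict L).tilted fun y => ⟪x, y⟫

/-- The barycentre of `expTilt L x`; as a function of `x` it is the gradient of the logarithm of
`laplaceInt L`, that is, the moment map of `L`. -/
def tiltMean (L : Set E) (x : E) : E := ∫ y, y ∂expTilt L x

lemma integrableOn_exp_inner (hL : IsCompact L) (x : E) :
    IntegrableOn (fun y => Real.exp ⟪x, y⟫) L :=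
  (by fun_prop : Continuous _).continuousOn.integrableOn_compact hL

lemma laplaceInt_pos (hL : IsCompact L) (hv : volume L ≠ 0) (x : E) : 0 < laplaceInt L x :=
  haveI : NeZero (volume.restrict L) := ⟨Measure.restrict_eq_zero.not.2 hv⟩
  integral_exp_pos (integrableOn_exp_inner hL x)

lemma isProbabilityMeasure_expTilt (hL : IsCompact L) (hv : volume L ≠ 0) (x : E) :
    IsProbabilityMeasure (expTilt L x) :=
  haveI : NeZero (volume.restrict L) := ⟨Measure.restrict_eq_zero.not.2 hv⟩
  isProbabilityMeasure_tilted (integrableOn_exp_inner hL x)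

lemma ae_expTilt_mem (hL : MeasurableSet L) (x : E) : ∀ᵐ y ∂expTilt L x, y ∈ L :=
  tilted_absolutelyContinuous _ _ (ae_restrict_mem hL)

lemma integrable_expTilt {F : Type*} [NormedAddCommGroup F] [NormedSpace ℝ F] (hL : IsCompact L)
    {f : E → F} (hf : Continuous f) (x : E) : Integrable f (expTilt L x) :=
  (integrable_tilted_iff (integrableOn_exp_inner hL x) f).2
    ((by fun_prop : Continuous _).continuousOn.integrableOn_compact hL)

section Derivative

variable {F : Type*} [NormedAddCommGroup F] [NormedSpace ℝ F]

lemma integral_expTilt (f : E → F) (x : E) :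
    ∫ y, f y ∂expTilt L x = (laplaceInt L x)⁻¹ • ∫ y in L, Real.exp ⟪x, y⟫ • f y := by
  rw [expTilt, integral_tilted, ← integral_smul]
  simp only [smul_smul, div_eq_inv_mul, laplaceInt]

lemma hasFDerivAt_setIntegral_exp_smul (hL : IsCompact L) {f : E → F}
    (hf : Continuous f) (x : E) :
    HasFDerivAt (fun x => ∫ y in L, Real.exp ⟪x, y⟫ • f y)
      (∫ y in L, Real.exp ⟪x, y⟫ • (innerSL ℝ y).smulRight (f y)) x := by
  have hexp (z : E) : Continuous fun y => Real.exp ⟪z, y⟫ • f y := by fun_prop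
  have hexp' (z : E) : Continuous fun y => Real.exp ⟪z, y⟫ • (innerSL ℝ y).smulRight (f y) :=
    (by fun_prop : Continuous fun y => Real.exp ⟪z, y⟫).smul
      (continuous_innerSL_smulRight hf continuous_id')
  have hbound : Continuous fun y => Real.exp ((‖x‖ + 1) * ‖y‖) * (‖y‖ * ‖f y‖) := by fun_prop
  refine hasFDerivAt_integral_of_dominated_of_fderiv_le (s := ball x 1)
    (F := fun z y => Real.exp ⟪z, y⟫ • f y)
    (F' := fun z y => Real.exp ⟪z, y⟫ • (innerSL ℝ y).smulRight (f y))
    (bound := fun y => Real.exp ((‖x‖ + 1) * ‖y‖) * (‖y‖ * ‖f y‖)) (ball_mem_nhds x one_pos)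
    (.of_forall fun z => (hexp z).aestronglyMeasurable)
    ((hexp x).continuousOn.integrableOn_compact hL)
    (hexp' x).aestronglyMeasurable
    (.of_forall fun y z hz => ?_) (hbound.continuousOn.integrableOn_compact hL)
    (.of_forall fun y z _ => ?_)
  · have hz' : ‖z‖ ≤ ‖x‖ + 1 := by
      linarith [norm_sub_norm_le z x, mem_ball_iff_norm.1 hz]
    rw [norm_smul, ContinuousLinearMap.norm_smulRight_apply, innerSL_apply_norm, Real.norm_eq_abs,
      Real.abs_exp]
    gcongr
    exact (real_inner_le_norm z y).trans (by gcongr)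
  · have hinner : HasFDerivAt (fun z : E => ⟪z, y⟫) (innerSL ℝ y) z :=
      (innerSL ℝ y).hasFDerivAt.congr_of_eventuallyEq (.of_forall fun w => real_inner_comm y w)
    refine (hinner.exp.smul_const (f y)).congr_fderiv ?_
    ext w
    simp [smul_smul]

lemma hasFDerivAt_laplaceInt (hL : IsCompact L) (hv : volume L ≠ 0) (x : E) :
    HasFDerivAt (laplaceInt L) (laplaceInt L x • innerSL ℝ (tiltMean L x)) x := by
  have h := hasFDerivAt_setIntegral_exp_smul hL (f := fun _ => (1 : ℝ)) continuous_const x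
  simp only [smul_eq_mul, mul_one] at h
  refine h.congr_fderiv ?_
  rw [tiltMean, integral_expTilt, map_smul, smul_inv_smul₀ (laplaceInt_pos hL hv x).ne',
    ← ContinuousLinearMap.integral_comp_comm]
  · congr 1 with y w
    simp only [smul_apply, ContinuousLinearMap.smulRight_apply, map_smul,
      smul_eq_mul, mul_one]
  · exact (by fun_prop : Continuous _).continuousOn.integrableOn_compact hL

lemma hasFDerivAt_integral_expTilt [CompleteSpace F] (hL : IsCompact L) (hv : volume L ≠ 0)
    {f : E → F} (hf : Continuous f) (x : E) :
    HasFDerivAt (fun x => ∫ y, f y ∂expTilt L x)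
      (∫ y, (innerSL ℝ (y - tiltMean L x)).smulRight (f y) ∂expTilt L x) x := by
  have hZ := (laplaceInt_pos hL hv x).ne'
  have hinv := (hasDerivAt_inv hZ).comp_hasFDerivAt x (hasFDerivAt_laplaceInt hL hv x)
  simp only [integral_expTilt f]
  refine (hinv.smul (hasFDerivAt_setIntegral_exp_smul hL hf x)).congr_fderiv ?_
  have hyf := continuous_innerSL_smulRight hf continuous_id'
  have hsplit : ∫ y, (innerSL ℝ (y - tiltMean L x)).smulRight (f y) ∂expTilt L x =
      ∫ y, (innerSL ℝ y).smulRight (f y) ∂expTilt L x -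
        (innerSL ℝ (tiltMean L x)).smulRight (∫ y, f y ∂expTilt L x) := by
    rw [← integral_innerSL_smulRight (integrable_expTilt hL hf x), ← integral_sub
      (integrable_expTilt hL hyf x)
      (integrable_expTilt hL (continuous_innerSL_smulRight hf continuous_const) x)]
    congr 1 with y w
    simp [sub_smul]
  rw [hsplit, integral_expTilt f, integral_expTilt]
  ext w
  simp [smul_smul, sub_eq_add_neg, pow_two, mul_comm, hZ]

end Derivative

lemma hasFDerivAt_tiltMean (hL : IsCompact L) (hv : volume L ≠ 0) (x : E) :
    HasFDerivAt (tiltMean L)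
      (∫ y, (innerSL ℝ (y - tiltMean L x)).smulRight (y - tiltMean L x) ∂expTilt L x) x := by
  have h := hasFDerivAt_integral_expTilt hL hv (continuous_sub_right (tiltMean L x)) x
  have hmean (z : E) : ∫ y, (y - tiltMean L x) ∂expTilt L z = tiltMean L z - tiltMean L x := by
    have := isProbabilityMeasure_expTilt hL hv z
    rw [integral_sub (integrable_expTilt hL continuous_id' z) (integrable_const _), integral_const,
      probReal_univ, one_smul]
    rfl
  simpa only [hmean, hasFDerivAt_sub_const_iff] using h

lemma differentiable_tiltMean (hL : IsCompact L) (hv : volume L ≠ 0) :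
    Differentiable ℝ (tiltMean L) :=
  fun x => (hasFDerivAt_tiltMean hL hv x).differentiableAt

lemma memLp_id_expTilt (hL : IsCompact L) (hv : volume L ≠ 0) (x : E) (p : ℝ≥0∞) :
    MemLp id p (expTilt L x) := by
  have := isProbabilityMeasure_expTilt hL hv x
  obtain ⟨R, hR⟩ := hL.isBounded.exists_norm_le
  exact .of_bound aestronglyMeasurable_id R ((ae_expTilt_mem hL.measurableSet x).mono hR)

lemma inner_fderiv_tiltMean (hL : IsCompact L) (hv : volume L ≠ 0) (x w w' : E) :
    ⟪fderiv ℝ (tiltMean L) x w, w'⟫ = ProbabilityTheory.covarianceBilin (expTilt L x) w w' := by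
  have := isProbabilityMeasure_expTilt hL hv x
  have hcont : Continuous fun y => y - tiltMean L x := by fun_prop
  rw [ProbabilityTheory.covarianceBilin_apply (memLp_id_expTilt hL hv x 2),
    (hasFDerivAt_tiltMean hL hv x).fderiv, ContinuousLinearMap.integral_apply
      (integrable_expTilt hL (continuous_innerSL_smulRight hcont hcont) x), real_inner_comm,
    ← integral_inner (integrable_expTilt hL (by fun_prop) x)]
  simp only [ContinuousLinearMap.smulRight_apply, innerSL_apply_apply, inner_smul_right,
    real_inner_comm, tiltMean, id]

lemma norm_tiltMean_le {R : ℝ} (hL : IsCompact L) (hv : volume L ≠ 0) (hR : ∀ y ∈ L, ‖y‖ ≤ R)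
    (x : E) : ‖tiltMean L x‖ ≤ R := by
  have := isProbabilityMeasure_expTilt hL hv x
  simpa [tiltMean] using
    norm_integral_le_of_norm_le_const ((ae_expTilt_mem hL.measurableSet x).mono hR)

lemma norm_fderiv_tiltMean_le {R : ℝ} (hL : IsCompact L) (hv : volume L ≠ 0)
    (hR : ∀ y ∈ L, ‖y‖ ≤ R) (x : E) : ‖fderiv ℝ (tiltMean L) x‖ ≤ (R + R) ^ 2 := by
  have := isProbabilityMeasure_expTilt hL hv x
  rw [(hasFDerivAt_tiltMean hL hv x).fderiv]
  refine (norm_integral_le_of_norm_le_const (C := (R + R) ^ 2)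
    ((ae_expTilt_mem hL.measurableSet x).mono fun y hy => ?_)).trans_eq (by simp)
  rw [ContinuousLinearMap.norm_smulRight_apply, innerSL_apply_norm, ← sq]
  gcongr
  exact (norm_sub_le _ _).trans (add_le_add (hR y hy) (norm_tiltMean_le hL hv hR x))

lemma tiltMean_mem (hL : IsCompact L) (hc : Convex ℝ L) (hv : volume L ≠ 0) (x : E) :
    tiltMean L x ∈ L := by
  have := isProbabilityMeasure_expTilt hL hv x
  exact hc.integral_mem hL.isClosed (ae_expTilt_mem hL.measurableSet x)
    (integrable_expTilt hL continuous_id' x)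

/-- Jensen's inequality for `exp` and the measure `expTilt L x`. -/
lemma log_laplaceInt_add_inner_le (hL : IsCompact L) (hv : volume L ≠ 0) (x z : E) :
    Real.log (laplaceInt L x) + ⟪z - x, tiltMean L x⟫ ≤ Real.log (laplaceInt L z) := by
  have := isProbabilityMeasure_expTilt hL hv x
  have hZ := laplaceInt_pos hL hv x
  have hinner : Continuous fun y => ⟪z - x, y⟫ := by fun_prop
  have hjensen := convexOn_exp.map_integral_le Real.continuous_exp.continuousOn isClosed_univ
    (.of_forall fun y => mem_univ ⟪z - x, y⟫) (integrable_expTilt hL hinner x)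
    (integrable_expTilt hL (Real.continuous_exp.comp hinner) x)
  have hratio : ∫ y, Real.exp ⟪z - x, y⟫ ∂expTilt L x = laplaceInt L z / laplaceInt L x := by
    rw [expTilt, integral_exp_tilted]
    simp only [Pi.add_apply, inner_sub_left, add_sub_cancel, laplaceInt]
  rw [integral_inner (integrable_expTilt hL continuous_id' x), hratio, le_div_iff₀ hZ] at hjensen
  rw [← Real.log_exp ⟪_, _⟫, add_comm, ← Real.log_mul (Real.exp_ne_zero _) hZ.ne']
  exact Real.log_le_log (by positivity) hjensen

lemma inner_tiltMean_sub_nonneg (hL : IsCompact L) (hv : volume L ≠ 0) (x z : E) :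
    0 ≤ ⟪tiltMean L x - tiltMean L z, x - z⟫ := by
  have hxz := log_laplaceInt_add_inner_le hL hv x z
  have hzx := log_laplaceInt_add_inner_le hL hv z x
  rw [real_inner_comm, inner_sub_right, ← neg_sub z x, inner_neg_left, inner_neg_left]
  rw [← neg_sub z x, inner_neg_left] at hzx
  linarith

lemma volume_hyperplane {w : E} (hw : w ≠ 0) (m : E) : volume {y : E | ⟪w, y - m⟫ = 0} = 0 := by
  have hker : (innerSL ℝ w : E →L[ℝ] ℝ).ker ≠ ⊤ := fun h =>
    hw (inner_self_eq_zero.1 (DFunLike.congr_fun (LinearMap.ker_eq_top.1 h) w))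
  have hpre : {y : E | ⟪w, y - m⟫ = 0} =
      (· + -m) ⁻¹' ((innerSL ℝ w : E →L[ℝ] ℝ).ker : Set E) := by
    ext y
    simp [sub_eq_add_neg]
  rw [hpre, measure_preimage_add_right, Measure.addHaar_submodule volume _ hker]

lemma covarianceBilin_expTilt_pos (hL : IsCompact L) (hv : volume L ≠ 0) (x : E) {w : E}
    (hw : w ≠ 0) : 0 < ProbabilityTheory.covarianceBilin (expTilt L x) w w := by
  have := isProbabilityMeasure_expTilt hL hv x
  have hcont (m : E) : Continuous fun y => ⟪w, y - m⟫ * ⟪w, y - m⟫ := by fun_prop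
  rw [ProbabilityTheory.covarianceBilin_apply (memLp_id_expTilt hL hv x 2),
    integral_pos_iff_support_of_nonneg (fun y => mul_self_nonneg _)
      (integrable_expTilt hL (hcont _) x), Function.support_mul, inter_self]
  have hnull : expTilt L x {y | ⟪w, y - tiltMean L x⟫ = 0} = 0 :=
    (tilted_absolutelyContinuous _ _).trans Measure.absolutelyContinuous_restrict
      (volume_hyperplane hw _)
  have hcompl : expTilt L x {y | ⟪w, y - tiltMean L x⟫ = 0}ᶜ = 1 :=
    (prob_compl_eq_one_iff₀ (.of_null hnull)).2 hnull
  exact zero_lt_one.trans_eq hcompl.symm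

lemma injective_of_inner_fderiv_pos {E : Type*} [NormedAddCommGroup E] [InnerProductSpace ℝ E]
    {f : E → E} (hf : Differentiable ℝ f) (hpos : ∀ x w, w ≠ 0 → 0 < ⟪fderiv ℝ f x w, w⟫) :
    Function.Injective f := by
  intro x z hxz
  by_contra hne
  have hw : z - x ≠ 0 := sub_ne_zero.2 (Ne.symm hne)
  have hderiv (s : ℝ) : HasDerivAt (fun s : ℝ => ⟪f (AffineMap.lineMap x z s), z - x⟫)
      ⟪fderiv ℝ f (AffineMap.lineMap x z s) (z - x), z - x⟫ s := by
    simpa using ((hf _).hasFDerivAt.comp_hasDerivAt s AffineMap.hasDerivAt_lineMap).inner ℝ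
      (hasDerivAt_const s (z - x))
  have hmono : StrictMono fun s : ℝ => ⟪f (AffineMap.lineMap x z s), z - x⟫ :=
    strictMono_of_deriv_pos fun s => by
      rw [(hderiv s).deriv]
      exact hpos _ _ hw
  simpa [hxz] using hmono zero_lt_one

lemma injective_tiltMean (hL : IsCompact L) (hv : volume L ≠ 0) :
    Function.Injective (tiltMean L) :=
  injective_of_inner_fderiv_pos (differentiable_tiltMean hL hv) fun x w hw =>
    (inner_fderiv_tiltMean hL hv x w w).symm ▸ covarianceBilin_expTilt_pos hL hv x hw

end LogLaplace

section Covariance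

lemma half_le_measureReal_lt {α : Type*} [MeasurableSpace α] {ν : Measure α}
    [IsProbabilityMeasure ν] {f : α → ℝ} {a : ℝ} (ha : 0 < a) (hf : 0 ≤ f) (hint : Integrable f ν)
    (h : ∫ y, f y ∂ν ≤ a) : 1 / 2 ≤ ν.real {y | f y < 2 * a} := by
  have hmarkov := mul_meas_ge_le_integral_of_nonneg (.of_forall hf) hint (2 * a)
  have hcompl : {y | 2 * a ≤ f y} = {y | f y < 2 * a}ᶜ := by
    ext
    simp
  rw [hcompl, probReal_compl_eq_one_sub₀
    (nullMeasurableSet_lt hint.aemeasurable aemeasurable_const)] at hmarkov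
  nlinarith

variable {E : Type*} [NormedAddCommGroup E] [InnerProductSpace ℝ E] [FiniteDimensional ℝ E]

lemma exists_comp_comp_adjoint_eq_id {Q : E →ₗ[ℝ] E} (hQ : Q.IsSymmetric)
    (hpos : ∀ w, w ≠ 0 → 0 < ⟪Q w, w⟫) : ∃ W : E →ₗ[ℝ] E, W ∘ₗ Q ∘ₗ W.adjoint = .id := by
  set b := hQ.eigenvectorBasis rfl
  set l := hQ.eigenvalues rfl
  have hQb (i) : Q (b i) = l i • b i := hQ.apply_eigenvectorBasis rfl i
  have hl (i) : 0 < l i := by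
    simpa [hQb, inner_smul_left] using hpos (b i) (b.orthonormal.ne_zero i)
  set W := b.toBasis.constr ℝ fun i => (√(l i))⁻¹ • b i
  have hWb (i) : W (b i) = (√(l i))⁻¹ • b i := by
    rw [← b.coe_toBasis, b.toBasis.constr_basis, b.coe_toBasis]
  have hadj : W = W.adjoint := by
    refine (LinearMap.eq_adjoint_iff_basis b.toBasis b.toBasis W W).2 fun i j => ?_
    rcases eq_or_ne i j with rfl | hij
    · simp [hWb, inner_smul_left, inner_smul_right]
    · simp [hWb, inner_smul_left, inner_smul_right, b.orthonormal.inner_eq_zero hij]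
  refine ⟨W, b.toBasis.ext fun i => ?_⟩
  have hsqrt : (√(l i))⁻¹ * (l i * (√(l i))⁻¹) = 1 := by
    have := (Real.sqrt_pos.2 (hl i)).ne'
    nth_rw 2 [← Real.mul_self_sqrt (hl i).le]
    field_simp
  simp [← hadj, hWb, hQb, smul_smul, hsqrt, mul_comm]

lemma det_adjoint (W : E →ₗ[ℝ] E) : LinearMap.det W.adjoint = LinearMap.det W := by
  have b := stdOrthonormalBasis ℝ E
  rw [← LinearMap.det_toMatrix b.toBasis, LinearMap.toMatrix_adjoint, Matrix.det_conjTranspose,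
    LinearMap.det_toMatrix, star_trivial]

variable [MeasurableSpace E] [BorelSpace E]

lemma integral_sq_norm_eq_finrank {ν : Measure E} [IsProbabilityMeasure ν] (hν : MemLp id 2 ν)
    {Q W : E →ₗ[ℝ] E} (hQ : ∀ w w', ⟪Q w, w'⟫ = ProbabilityTheory.covarianceBilin ν w w')
    (hW : W ∘ₗ Q ∘ₗ W.adjoint = .id) :
    Integrable (fun y => ‖W (y - ∫ z, z ∂ν)‖ ^ 2) ν ∧
      ∫ y, ‖W (y - ∫ z, z ∂ν)‖ ^ 2 ∂ν = Module.finrank ℝ E := by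
  set b := stdOrthonormalBasis ℝ E
  have hexpand (y : E) : ‖W (y - ∫ z, z ∂ν)‖ ^ 2 =
      ∑ i, ⟪W.adjoint (b i), y - ∫ z, z ∂ν⟫ * ⟪W.adjoint (b i), y - ∫ z, z ∂ν⟫ := by
    rw [← b.sum_sq_norm_inner_right]
    simp only [LinearMap.adjoint_inner_left, Real.norm_eq_abs, sq_abs, ← sq]
  have hint (i) : Integrable (fun y =>
      ⟪W.adjoint (b i), y - ∫ z, z ∂ν⟫ * ⟪W.adjoint (b i), y - ∫ z, z ∂ν⟫) ν := by
    have : MemLp (fun y => ⟪W.adjoint (b i), y - ∫ z, z ∂ν⟫) 2 ν :=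
      (hν.sub (memLp_const (∫ z, z ∂ν))).const_inner _
    exact this.integrable_mul this
  have hone (i) : ∫ y, ⟪W.adjoint (b i), y - ∫ z, z ∂ν⟫ * ⟪W.adjoint (b i), y - ∫ z, z ∂ν⟫ ∂ν
      = 1 := by
    have := ProbabilityTheory.covarianceBilin_apply hν (W.adjoint (b i)) (W.adjoint (b i))
    rw [← hQ, LinearMap.adjoint_inner_right] at this
    refine this.symm.trans ?_
    rw [← LinearMap.comp_apply, ← LinearMap.comp_apply, LinearMap.comp_assoc, hW]
    simp
  simp only [hexpand]
  refine ⟨integrable_finsetSum _ fun i _ => hint i, ?_⟩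
  rw [integral_finsetSum _ fun i _ => hint i]
  simp [hone]

lemma volume_ellipsoid {W : E →ₗ[ℝ] E} (hW : LinearMap.det W ≠ 0) (m : E) {r : ℝ} (hr : 0 < r) :
    volume {y | ‖W (y - m)‖ ^ 2 < r} =
      ENNReal.ofReal (|(LinearMap.det W)⁻¹| * √r ^ Module.finrank ℝ E) *
        volume (ball (0 : E) 1) := by
  have hball : {y | ‖W (y - m)‖ ^ 2 < r} = (· + -m) ⁻¹' (W ⁻¹' ball 0 (√r)) := by
    ext y
    simp only [mem_ofPred_eq, mem_preimage, mem_ball_zero_iff, Real.lt_sqrt (norm_nonneg _),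
      sub_eq_add_neg]
  rw [hball, measure_preimage_add_right, Measure.addHaar_preimage_linearMap _ hW,
    Measure.addHaar_ball_of_pos _ _ (Real.sqrt_pos.2 hr), ENNReal.ofReal_mul (abs_nonneg _),
    mul_assoc]

lemma measureReal_le_mul_of_le_smul {Ω : Type*} [MeasurableSpace Ω] {μ ν : Measure Ω} {c : ℝ}
    (hc : 0 ≤ c) (hle : ν ≤ ENNReal.ofReal c • μ) {S : Set Ω} (hS : μ S ≠ ⊤) :
    ν.real S ≤ c * μ.real S := by
  have h := ENNReal.toReal_mono (ENNReal.mul_ne_top ENNReal.ofReal_ne_top hS) (hle S)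
  rwa [ENNReal.toReal_mul, ENNReal.toReal_ofReal hc] at h

lemma one_le_det_covariance [Nontrivial E] {ν : Measure E} [IsProbabilityMeasure ν]
    (hν : MemLp id 2 ν) {c : ℝ} (hc : 0 ≤ c) (hle : ν ≤ ENNReal.ofReal c • volume)
    {Q : E →ₗ[ℝ] E} (hQ : ∀ w w', ⟪Q w, w'⟫ = ProbabilityTheory.covarianceBilin ν w w')
    (hpos : ∀ w, w ≠ 0 → 0 < ⟪Q w, w⟫) :
    1 ≤ 4 * c ^ 2 * volume.real (ball (0 : E) 1) ^ 2 *
      (2 * Module.finrank ℝ E) ^ Module.finrank ℝ E * LinearMap.det Q := by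
  set n := Module.finrank ℝ E
  have hsymm : Q.IsSymmetric := fun w w' => by
    rw [real_inner_comm (Q w'), hQ, hQ, ProbabilityTheory.covarianceBilin_comm]
  obtain ⟨W, hW⟩ := exists_comp_comp_adjoint_eq_id hsymm hpos
  obtain ⟨hint, hcov⟩ := integral_sq_norm_eq_finrank hν hQ hW
  have hn : (0 : ℝ) < n := Nat.cast_pos.2 Module.finrank_pos
  have hdet : W.det ^ 2 * Q.det = 1 := by
    have := congrArg LinearMap.det hW
    rw [LinearMap.det_comp, LinearMap.det_comp, det_adjoint, LinearMap.det_id] at this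
    linarith
  have hW0 : W.det ≠ 0 := fun h => by simp [h] at hdet
  set S := {y | ‖W (y - ∫ z, z ∂ν)‖ ^ 2 < 2 * n}
  have hvol := volume_ellipsoid hW0 (∫ z, z ∂ν) (by positivity : (0 : ℝ) < 2 * n)
  have hhalf := half_le_measureReal_lt hn (fun y => sq_nonneg _) hint hcov.le
  have hmass : 1 / 2 ≤ c * (|W.det⁻¹| * √(2 * n) ^ n * volume.real (ball (0 : E) 1)) := by
    have hfin : volume S ≠ ⊤ :=
      hvol ▸ ENNReal.mul_ne_top ENNReal.ofReal_ne_top measure_ball_lt_top.ne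
    refine (hhalf.trans (measureReal_le_mul_of_le_smul hc hle hfin)).trans_eq ?_
    rw [measureReal_def, hvol, ENNReal.toReal_mul, ENNReal.toReal_ofReal (by positivity),
      ← measureReal_def]
  calc (1 : ℝ) = 4 * (1 / 2) ^ 2 * (W.det ^ 2 * Q.det) := by rw [hdet]; norm_num
    _ ≤ 4 * (c * (|W.det⁻¹| * √(2 * n) ^ n * volume.real (ball (0 : E) 1))) ^ 2 *
          (W.det ^ 2 * Q.det) := by
      rw [hdet]; gcongr
    _ = 4 * c ^ 2 * volume.real (ball (0 : E) 1) ^ 2 * (√(2 * n) ^ 2) ^ n *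
          (|W.det⁻¹| ^ 2 * W.det ^ 2) * Q.det := by ring
    _ = _ := by
      rw [Real.sq_sqrt (by positivity), sq_abs, ← mul_pow, inv_mul_cancel₀ hW0, one_pow, mul_one]

end Covariance

section Santalo

section LaplaceBounds

variable {E : Type*} [NormedAddCommGroup E] [InnerProductSpace ℝ E] [FiniteDimensional ℝ E]
  [MeasurableSpace E] [BorelSpace E] {L : Set E}

lemma expTilt_le_smul_volume (hL : IsCompact L) {x : E} {H : ℝ}
    (hH : ∀ y ∈ L, Real.exp ⟪x, y⟫ ≤ H) :
    expTilt L x ≤ ENNReal.ofReal (H / laplaceInt L x) • volume := by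
  rw [expTilt, Measure.tilted]
  refine (withDensity_mono (g := fun _ => ENNReal.ofReal (H / laplaceInt L x)) ?_).trans ?_
  swap
  · rw [withDensity_const]
    exact fun s => by
      simp only [Measure.smul_apply, smul_eq_mul]
      gcongr
      exact Measure.restrict_le_self
  filter_upwards [ae_restrict_mem hL.measurableSet] with y hy
  have hZ : 0 ≤ laplaceInt L x := integral_nonneg fun _ => (Real.exp_pos _).le
  exact ENNReal.ofReal_le_ofReal (div_le_div_of_nonneg_right (hH y hy) hZ)

lemma sq_laplaceInt_le_det_fderiv [Nontrivial E] (hL : IsCompact L) (hv : volume L ≠ 0) {x : E}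
    {H : ℝ} (hH0 : 0 ≤ H) (hH : ∀ y ∈ L, Real.exp ⟪x, y⟫ ≤ H) :
    laplaceInt L x ^ 2 ≤ 4 * H ^ 2 * volume.real (ball (0 : E) 1) ^ 2 *
      (2 * Module.finrank ℝ E) ^ Module.finrank ℝ E * (fderiv ℝ (tiltMean L) x).det := by
  have := isProbabilityMeasure_expTilt hL hv x
  have hZ := laplaceInt_pos hL hv x
  have h := one_le_det_covariance (memLp_id_expTilt hL hv x 2) (by positivity)
    (expTilt_le_smul_volume hL hH) (Q := fderiv ℝ (tiltMean L) x) (inner_fderiv_tiltMean hL hv x)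
    fun w hw => (inner_fderiv_tiltMean hL hv x w w).symm ▸ covarianceBilin_expTilt_pos hL hv x hw
  rw [div_pow] at h
  calc laplaceInt L x ^ 2 ≤ laplaceInt L x ^ 2 * _ := le_mul_of_one_le_right (by positivity) h
    _ = _ := by field_simp

lemma exp_neg_mul_volume_le_laplaceInt (hL : IsCompact L) {x : E} {a : ℝ}
    (ha : ∀ y ∈ L, -a ≤ ⟪x, y⟫) : Real.exp (-a) * volume.real L ≤ laplaceInt L x := by
  rw [mul_comm, ← smul_eq_mul, ← setIntegral_const]
  exact setIntegral_mono_on (integrableOn_const hL.measure_lt_top.ne) (integrableOn_exp_inner hL x)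
    hL.measurableSet fun y hy => Real.exp_le_exp.2 (ha y hy)

/-- The moment map of `L` is injective with values in `L`, and the bound on `⟪x, y⟫` keeps its
Jacobian large on `P`. -/
theorem volume_mul_volume_le_of_abs_inner_le [Nontrivial E] (hL : IsCompact L) (hc : Convex ℝ L)
    (hv : volume L ≠ 0) {P : Set E} (hP : MeasurableSet P) {a : ℝ}
    (ha : ∀ x ∈ P, ∀ y ∈ L, |⟪x, y⟫| ≤ a) :
    volume.real P * volume.real L ≤ 4 * Real.exp (4 * a) * volume.real (ball (0 : E) 1) ^ 2 *
      (2 * Module.finrank ℝ E) ^ Module.finrank ℝ E := by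
  set k := volume.real L
  set C := 4 * Real.exp (4 * a) * volume.real (ball (0 : E) 1) ^ 2 *
    (2 * Module.finrank ℝ E) ^ Module.finrank ℝ E
  have hk : 0 < k := ENNReal.toReal_pos hv hL.measure_lt_top.ne
  have hω : 0 < volume.real (ball (0 : E) 1) :=
    ENNReal.toReal_pos (measure_ball_pos _ _ one_pos).ne' measure_ball_lt_top.ne
  have hn : (0 : ℝ) < Module.finrank ℝ E := Nat.cast_pos.2 Module.finrank_pos
  have hdet (x : E) (hx : x ∈ P) : k ^ 2 / C ≤ |(fderiv ℝ (tiltMean L) x).det| := by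
    refine le_trans ?_ (le_abs_self _)
    have hexp : Real.exp (4 * a) = (Real.exp a) ^ 2 / Real.exp (-a) ^ 2 := by
      rw [← Real.exp_nat_mul, ← Real.exp_nat_mul, ← Real.exp_sub]
      congr 1
      push_cast
      ring
    have h := (pow_le_pow_left₀ (by positivity) (exp_neg_mul_volume_le_laplaceInt hL fun y hy =>
      (abs_le.1 (ha x hx y hy)).1) 2).trans (sq_laplaceInt_le_det_fderiv hL hv (Real.exp_pos a).le
        fun y hy => Real.exp_le_exp.2 (abs_le.1 (ha x hx y hy)).2)
    rw [div_le_iff₀ (by positivity)]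
    calc k ^ 2 = (Real.exp (-a) * k) ^ 2 / Real.exp (-a) ^ 2 := by field_simp
      _ ≤ _ / Real.exp (-a) ^ 2 := div_le_div_of_nonneg_right h (by positivity)
      _ = _ := by
        simp only [C, hexp]
        ring
  have hmaps : tiltMean L '' P ⊆ L := image_subset_iff.2 fun x _ => tiltMean_mem hL hc hv x
  have hvol : ENNReal.ofReal (k ^ 2 / C) * volume P ≤ volume L := by
    refine le_trans ?_ (measure_mono hmaps)
    rw [← lintegral_abs_det_fderiv_eq_addHaar_image volume hP
      (fun x _ => (differentiable_tiltMean hL hv x).hasFDerivAt.hasFDerivWithinAt)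
      (injective_tiltMean hL hv).injOn, ← setLIntegral_const]
    exact setLIntegral_mono' hP fun x hx => ENNReal.ofReal_le_ofReal (hdet x hx)
  have hreal := ENNReal.toReal_mono hL.measure_lt_top.ne hvol
  rw [ENNReal.toReal_mul, ENNReal.toReal_ofReal (by positivity)] at hreal
  change k ^ 2 / C * volume.real P ≤ k at hreal
  have hC : 0 < C := by positivity
  rw [div_mul_eq_mul_div, div_le_iff₀ hC] at hreal
  nlinarith

end LaplaceBounds

lemma ωd_pos (d : ℕ) : 0 < ωd d :=
  ENNReal.toReal_pos (measure_ball_pos _ _ one_pos).ne' measure_ball_lt_top.ne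

lemma isClosed_polarSet {d : ℕ} (S : Set (Euc d)) : IsClosed (polarSet S) := by
  have hinter : polarSet S = ⋂ x ∈ S, {y | ⟪x, y⟫ ≤ 1} := by
    ext y
    simp [polarSet]
  rw [hinter]
  exact isClosed_biInter fun x _ => isClosed_le (by fun_prop) continuous_const

/-- A weak form of the Blaschke–Santaló inequality. -/
theorem volume_mul_volume_polarSet_le {d : ℕ} (hd : d ≠ 0) {K : Set (Euc d)} (hK : IsCompact K)
    (hc : Convex ℝ K) (hs : ∀ v ∈ K, -v ∈ K) (hv : volume K ≠ 0) :
    volume.real K * volume.real (polarSet K) ≤ (8 * Real.exp 4) ^ d * ωd d ^ 2 := by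
  have : Nontrivial (Euc d) := Module.nontrivial_of_finrank_pos (R := ℝ) (by simp; omega)
  have hd0 : (0 : ℝ) < d := by positivity
  have habs : ∀ x ∈ (d : ℝ) • polarSet K, ∀ y ∈ K, |⟪x, y⟫| ≤ d := by
    rintro _ ⟨u, hu, rfl⟩ y hy
    have hneg := hu (-y) (hs y hy)
    rw [inner_neg_left] at hneg
    rw [real_inner_smul_left, real_inner_comm, abs_mul, abs_of_pos hd0]
    exact mul_le_of_le_one_right hd0.le (abs_le.2 ⟨by linarith, hu y hy⟩)
  have h := volume_mul_volume_le_of_abs_inner_le hK hc hv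
    ((isClosed_polarSet K).measurableSet.const_smul₀ (d : ℝ)) habs
  rw [measureReal_def, Measure.addHaar_smul, ENNReal.toReal_mul, finrank_euclideanSpace_fin,
    abs_of_nonneg (by positivity), ENNReal.toReal_ofReal (by positivity)] at h
  change (d : ℝ) ^ d * volume.real (polarSet K) * volume.real K ≤ _ * ωd d ^ 2 * _ at h
  have h4 : (4 : ℝ) ≤ 4 ^ d := le_self_pow₀ (by norm_num) hd
  refine le_of_mul_le_mul_left ?_ (pow_pos hd0 d)
  calc (d : ℝ) ^ d * (volume.real K * volume.real (polarSet K))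
      ≤ 4 * Real.exp (4 * d) * ωd d ^ 2 * (2 * d) ^ d := by linarith
    _ ≤ 4 ^ d * Real.exp (4 * d) * ωd d ^ 2 * (2 * d) ^ d := by gcongr
    _ = (d : ℝ) ^ d * ((8 * Real.exp 4) ^ d * ωd d ^ 2) := by
      have h8 : (8 : ℝ) ^ d = 4 ^ d * 2 ^ d := by
        rw [← mul_pow]
        norm_num
      rw [mul_comm 4 (d : ℝ), Real.exp_nat_mul, mul_pow 8, h8]
      ring

end Santalo

section ParameterIntegrals

lemma differentiable_integral_of_dominated {α : Type*} [MeasurableSpace α] {μ : Measure α}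
    {f : ℂ → α → ℂ} (hm : ∀ z, AEStronglyMeasurable (f z) μ)
    (hd : ∀ a, Differentiable ℂ (fun z => f z a))
    (hb : ∀ R : ℝ, ∃ B : α → ℝ, Integrable B μ ∧ ∀ z : ℂ, ‖z‖ ≤ R → ∀ a, ‖f z a‖ ≤ B a) :
    Differentiable ℂ (fun z => ∫ a, f z a ∂μ) := by
  intro z₀
  obtain ⟨B, hB, hfB⟩ := hb (‖z₀‖ + 2)
  have hball : ∀ z ∈ ball z₀ 1, ∀ w ∈ closedBall z 1, ‖w‖ ≤ ‖z₀‖ + 2 := fun z hz w hw => by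
    have hzw : ‖w - z‖ ≤ 1 := mem_closedBall_iff_norm.1 hw
    have hz₀ : ‖z - z₀‖ < 1 := mem_ball_iff_norm.1 hz
    linarith [norm_sub_norm_le w z, norm_sub_norm_le z z₀]
  have hderiv : ∀ a, ∀ z ∈ ball z₀ 1, ‖deriv (fun z => f z a) z‖ ≤ B a := fun a z hz => by
    simpa only [div_one] using Complex.norm_deriv_le_of_forall_mem_sphere_norm_le one_pos
      (hd a).diffContOnCl fun w hw => hfB w (hball z hz w (sphere_subset_closedBall hw)) a
  have hmeas : AEStronglyMeasurable (fun a => deriv (fun z => f z a) z₀) μ := by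
    have hseq : Filter.Tendsto (fun k : ℕ => 1 / ((k : ℂ) + 1)) Filter.atTop
        (nhdsWithin 0 {0}ᶜ) := by
      refine tendsto_nhdsWithin_iff.2 ⟨tendsto_one_div_add_atTop_nhds_zero_nat, .of_forall ?_⟩
      exact fun k => one_div_ne_zero (Nat.cast_add_one_ne_zero k)
    exact aestronglyMeasurable_of_tendsto_ae Filter.atTop
      (f := fun k : ℕ => (1 / ((k : ℂ) + 1))⁻¹ • (f (z₀ + 1 / ((k : ℂ) + 1)) - f z₀))
      (fun k => ((hm _).sub (hm _)).const_smul _)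
      (.of_forall fun a => (hd a z₀).hasDerivAt.tendsto_slope_zero.comp hseq)
  have hz₀ : ∀ a, ‖f z₀ a‖ ≤ B a := hfB z₀ (by linarith)
  exact (hasDerivAt_integral_of_dominated_loc_of_deriv_le (ball_mem_nhds _ one_pos)
    (.of_forall hm) (hB.mono' (hm _) (.of_forall hz₀)) hmeas (.of_forall hderiv) hB
    (.of_forall fun a z _ => (hd a z).hasDerivAt)).2.differentiableAt

lemma eq_of_eventually_eq_ofReal {f : ℂ → ℂ} {c : ℂ} (hf : Differentiable ℂ f)
    (h : ∀ᶠ t : ℝ in nhds 0, f t = c) (z : ℂ) : f z = c := by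
  have hreal : Filter.Tendsto (fun t : ℝ => (t : ℂ)) (nhdsWithin 0 {0}ᶜ) (nhdsWithin 0 {0}ᶜ) := by
    refine tendsto_nhdsWithin_iff.2 ⟨?_, ?_⟩
    · exact (Complex.continuous_ofReal.tendsto' 0 0 rfl).mono_left nhdsWithin_le_nhds
    · filter_upwards [self_mem_nhdsWithin] with t ht using Complex.ofReal_ne_zero.2 ht
  have hfreq : ∃ᶠ z in nhdsWithin 0 {0}ᶜ, f z = c :=
    hreal.frequently (h.filter_mono nhdsWithin_le_nhds).frequently
  have hf_an : AnalyticOnNhd ℂ f univ := fun w _ => hf.analyticAt w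
  exact congrFun (hf_an.eq_of_frequently_eq (fun _ _ => analyticAt_const) hfreq) z

end ParameterIntegrals

section NearIdentity

variable {V : Type*} [NormedAddCommGroup V] [NormedSpace ℝ V]

lemma exists_forall_norm_lt_det_id_add_pos :
    ∃ ε > 0, ∀ A : V →L[ℝ] V, ‖A‖ < ε → 0 < (ContinuousLinearMap.id ℝ V + A).det := by
  have hcont : Continuous fun A : V →L[ℝ] V => (ContinuousLinearMap.id ℝ V + A).det :=
    ContinuousLinearMap.continuous_det.comp (by fun_prop)
  have hzero : 0 < (ContinuousLinearMap.id ℝ V + 0).det := by simp [ContinuousLinearMap.det]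
  obtain ⟨ε, hε, h⟩ := Metric.eventually_nhds_iff.1
    (hcont.continuousAt.eventually (lt_mem_nhds hzero))
  exact ⟨ε, hε, fun A hA => h (by rwa [dist_zero_right])⟩

lemma bijective_id_add_of_norm_fderiv_le [CompleteSpace V] {w : V → V}
    (hw : Differentiable ℝ w) {c : ℝ} (hc : c < 1) (hb : ∀ p, ‖fderiv ℝ w p‖ ≤ c) :
    Function.Bijective fun p => p + w p := by
  rcases subsingleton_or_nontrivial V with _ | _
  · exact ⟨Function.injective_of_subsingleton _, fun q => ⟨q, Subsingleton.elim _ _⟩⟩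
  lift c to NNReal using (norm_nonneg _).trans (hb 0)
  have happ : ApproximatesLinearOn (fun p => p + w p)
      (ContinuousLinearEquiv.refl ℝ V : V →L[ℝ] V) univ c := fun p _ q _ => by
    have hsub : p + w p - (q + w q) - (ContinuousLinearEquiv.refl ℝ V : V →L[ℝ] V) (p - q) =
        w p - w q := by
      simp only [ContinuousLinearEquiv.coe_refl, ContinuousLinearMap.id_apply]; abel
    rw [hsub]
    exact convex_univ.norm_image_sub_le_of_norm_fderiv_le (fun x _ => hw x) (fun x _ => hb x)
      (mem_univ q) (mem_univ p)
  refine (happ.toHomeomorph _ (.inr ?_)).bijective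
  have hone : ‖((ContinuousLinearEquiv.refl ℝ V).symm : V →L[ℝ] V)‖₊ = 1 :=
    NNReal.eq ContinuousLinearMap.norm_id
  rwa [hone, inv_one, ← NNReal.coe_lt_one]

end NearIdentity

section RealGaussian

variable {V : Type*} [NormedAddCommGroup V] [InnerProductSpace ℝ V] [FiniteDimensional ℝ V]
  [MeasurableSpace V] [BorelSpace V]

lemma integrable_exp_neg_mul_sq_norm {a : ℝ} (ha : 0 < a) :
    Integrable fun p : V => Real.exp (-a * ‖p‖ ^ 2) := by
  refine (GaussianFourier.integrable_cexp_neg_mul_sq_norm_add (V := V) (b := a) (by simpa) 0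
    0).norm.congr (.of_forall fun p => ?_)
  simp [Complex.norm_exp, ← Complex.ofReal_pow]

lemma exists_forall_norm_fderiv_lt_integral_gauss_comp_eq :
    ∃ ε > 0, ∀ w : V → V, Differentiable ℝ w → (∀ p, ‖fderiv ℝ w p‖ < ε) →
      ∫ p, Real.exp (-(1 / 2) * ‖p + w p‖ ^ 2) *
          (ContinuousLinearMap.id ℝ V + fderiv ℝ w p).det =
        ∫ p : V, Real.exp (-(1 / 2) * ‖p‖ ^ 2) := by
  obtain ⟨ε, hε, hdet⟩ := exists_forall_norm_lt_det_id_add_pos (V := V)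
  refine ⟨min ε (1 / 2), by positivity, fun w hw hsmall => ?_⟩
  have hbij := bijective_id_add_of_norm_fderiv_le hw one_half_lt_one fun p =>
    (hsmall p).le.trans (min_le_right _ _)
  have hderiv : ∀ p ∈ univ, HasFDerivWithinAt (fun p => p + w p)
      (ContinuousLinearMap.id ℝ V + fderiv ℝ w p) univ p := fun p _ =>
    ((hasFDerivAt_id p).add (hw p).hasFDerivAt).hasFDerivWithinAt
  have hchange := integral_image_eq_integral_abs_det_fderiv_smul volume MeasurableSet.univ hderiv
    hbij.1.injOn fun q => Real.exp (-(1 / 2) * ‖q‖ ^ 2)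
  rw [image_univ, hbij.2.range_eq, Measure.restrict_univ] at hchange
  rw [hchange]
  refine integral_congr_ae (.of_forall fun p => ?_)
  beta_reduce
  rw [abs_of_pos (hdet _ ((hsmall p).trans_le (min_le_left _ _))), smul_eq_mul, mul_comm]

end RealGaussian

section ComplexGaussian

variable {ι V : Type*} [Fintype ι] [NormedAddCommGroup V] [InnerProductSpace ℝ V]

/-- The Jacobian matrix of `id + u + z • v` at `p` in the basis `b`, for a complex parameter `z`. -/
def complexJacobian (b : OrthonormalBasis ι ℝ V) (u v : V → V) (z : ℂ) (p : V) : Matrix ι ι ℂ :=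
  Matrix.of fun i j =>
    ((⟪b i, b j + fderiv ℝ u p (b j)⟫ : ℝ) : ℂ) + z * ((⟪b i, fderiv ℝ v p (b j)⟫ : ℝ) : ℂ)

/-- The pullback of the Gaussian density `exp (-‖·‖² / 2)` under `id + u + z • v`, continued
holomorphically from real to complex `z`: the square of the norm extends as a complex bilinear
form and the Jacobian determinant enters without absolute value. -/
def gaussPullback [DecidableEq ι] (b : OrthonormalBasis ι ℝ V) (u v : V → V) (z : ℂ) (p : V) : ℂ :=
  Complex.exp (-(1 / 2) * (((‖p + u p‖ ^ 2 : ℝ) : ℂ) + 2 * z * ((⟪p + u p, v p⟫ : ℝ) : ℂ) +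
    z ^ 2 * ((‖v p‖ ^ 2 : ℝ) : ℂ))) * (complexJacobian b u v z p).det

lemma norm_complexJacobian_le {b : OrthonormalBasis ι ℝ V} {u v : V → V} {C R : ℝ} {z : ℂ}
    {p : V} (hu : ‖fderiv ℝ u p‖ ≤ C) (hv : ‖fderiv ℝ v p‖ ≤ C) (hz : ‖z‖ ≤ R) (i j : ι) :
    ‖complexJacobian b u v z p i j‖ ≤ 1 + C + R * C := by
  have happly : ∀ A : V →L[ℝ] V, ‖A‖ ≤ C → ‖A (b j)‖ ≤ C := fun A hA =>
    (A.le_opNorm _).trans (by rwa [b.norm_eq_one, mul_one])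
  have hinner : ∀ x : V, ‖((⟪b i, x⟫ : ℝ) : ℂ)‖ ≤ ‖x‖ := fun x => by
    simpa only [Complex.norm_real, b.norm_eq_one, one_mul] using norm_inner_le_norm (𝕜 := ℝ) (b i) x
  refine (norm_add_le _ _).trans (add_le_add ((hinner _).trans ((norm_add_le _ _).trans ?_)) ?_)
  · rw [b.norm_eq_one]
    exact add_le_add_right (happly _ hu) 1
  · rw [norm_mul]
    exact mul_le_mul hz ((hinner _).trans (happly _ hv)) (norm_nonneg _) ((norm_nonneg _).trans hz)

variable [DecidableEq ι]

lemma differentiable_gaussPullback (b : OrthonormalBasis ι ℝ V) (u v : V → V) (p : V) :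
    Differentiable ℂ fun z => gaussPullback b u v z p := by
  unfold gaussPullback complexJacobian
  simp only [Matrix.det_apply', Matrix.of_apply]
  fun_prop

lemma gaussPullback_ofReal (b : OrthonormalBasis ι ℝ V) {u v : V → V} (t : ℝ) (p : V) :
    gaussPullback b u v t p = ((Real.exp (-(1 / 2) * ‖p + (u p + t • v p)‖ ^ 2) *
      (ContinuousLinearMap.id ℝ V + (fderiv ℝ u p + t • fderiv ℝ v p)).det : ℝ) : ℂ) := by
  have hnorm : ‖p + (u p + t • v p)‖ ^ 2 =
      ‖p + u p‖ ^ 2 + 2 * t * ⟪p + u p, v p⟫ + t ^ 2 * ‖v p‖ ^ 2 := by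
    rw [← add_assoc, norm_add_sq_real, inner_smul_right, norm_smul, mul_pow, Real.norm_eq_abs,
      sq_abs]
    ring
  have hdet : (complexJacobian b u v t p).det =
      ((ContinuousLinearMap.id ℝ V + (fderiv ℝ u p + t • fderiv ℝ v p)).det : ℂ) := by
    rw [ContinuousLinearMap.det, ← LinearMap.det_toMatrix b.toBasis,
      ← Complex.ofRealHom_eq_coe (Matrix.det _), RingHom.map_det]
    congr 1
    ext i j
    rw [RingHom.mapMatrix_apply, Matrix.map_apply, LinearMap.toMatrix_apply, b.coe_toBasis,
      b.coe_toBasis_repr_apply, b.repr_apply_apply]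
    simp [complexJacobian, inner_add_right, inner_smul_right, add_assoc]
  rw [gaussPullback, hdet, hnorm]
  push_cast
  rfl

lemma norm_gaussPullback_le (b : OrthonormalBasis ι ℝ V) {u v : V → V} {C R : ℝ} {z : ℂ} {p : V}
    (hu : ‖u p‖ ≤ C) (hv : ‖v p‖ ≤ C) (hu' : ‖fderiv ℝ u p‖ ≤ C) (hv' : ‖fderiv ℝ v p‖ ≤ C)
    (hz : ‖z‖ ≤ R) : ‖gaussPullback b u v z p‖ ≤
      Real.exp (-(1 / 8) * ‖p‖ ^ 2) * (Real.exp (C ^ 2 / 4 + 3 / 2 * (R * C) ^ 2) *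
        ((Fintype.card ι).factorial • (1 + C + R * C) ^ Fintype.card ι)) := by
  have : 0 ≤ C := (norm_nonneg _).trans hu
  have hR : 0 ≤ R := (norm_nonneg _).trans hz
  have hdet := Matrix.det_le (abv := NormedField.toAbsoluteValue ℂ)
    fun i j => norm_complexJacobian_le (b := b) hu' hv' hz i j
  have hcross : -(R * C * ‖p + u p‖) ≤ (z * ((⟪p + u p, v p⟫ : ℝ) : ℂ)).re := by
    refine (neg_le_neg ?_).trans (abs_le.1 (Complex.abs_re_le_norm _)).1
    rw [norm_mul, Complex.norm_real]
    calc ‖z‖ * ‖⟪p + u p, v p⟫‖ ≤ R * (‖p + u p‖ * C) := by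
          gcongr
          exact (norm_inner_le_norm _ _).trans (by gcongr)
      _ = R * C * ‖p + u p‖ := by ring
  have hsq : -(R * C) ^ 2 ≤ (z ^ 2 * ((‖v p‖ ^ 2 : ℝ) : ℂ)).re := by
    refine (neg_le_neg ?_).trans (abs_le.1 (Complex.abs_re_le_norm _)).1
    rw [norm_mul, norm_pow, Complex.norm_real, norm_pow, norm_norm, ← mul_pow]
    gcongr
  have hp : ‖p‖ ≤ ‖p + u p‖ + C := (norm_le_add_norm_add p (u p)).trans (by gcongr)
  rw [gaussPullback, norm_mul, ← mul_assoc]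
  refine mul_le_mul ?_ hdet (norm_nonneg _) (by positivity)
  have hre : ∀ w : ℂ, (-(1 / 2) * w).re = -(1 / 2) * w.re := fun w => by
    simp
  rw [Complex.norm_exp, ← Real.exp_add, Real.exp_le_exp, hre, Complex.add_re, Complex.add_re,
    Complex.ofReal_re, mul_assoc, Complex.mul_re, Complex.re_ofNat, Complex.im_ofNat, zero_mul,
    sub_zero]
  have hp_sq : ‖p‖ ^ 2 ≤ (‖p + u p‖ + C) ^ 2 := by gcongr
  nlinarith [sq_nonneg (‖p + u p‖ - C), sq_nonneg (‖p + u p‖ - 2 * (R * C))]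

variable [FiniteDimensional ℝ V] [MeasurableSpace V] [BorelSpace V]

lemma measurable_gaussPullback (b : OrthonormalBasis ι ℝ V) {u v : V → V}
    (hu : Continuous u) (hv : Continuous v) (z : ℂ) : Measurable (gaussPullback b u v z) := by
  have := fun j => measurable_fderiv_apply_const ℝ u (b j)
  have := fun j => measurable_fderiv_apply_const ℝ v (b j)
  refine (Continuous.measurable (by fun_prop)).mul ?_
  simp only [complexJacobian, Matrix.det_apply', Matrix.of_apply]
  fun_prop

lemma differentiable_integral_gaussPullback (b : OrthonormalBasis ι ℝ V) {u v : V → V} {C : ℝ}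
    (hu : Continuous u) (hv : Continuous v) (huC : ∀ p, ‖u p‖ ≤ C) (hvC : ∀ p, ‖v p‖ ≤ C)
    (hu' : ∀ p, ‖fderiv ℝ u p‖ ≤ C) (hv' : ∀ p, ‖fderiv ℝ v p‖ ≤ C) :
    Differentiable ℂ fun z => ∫ p, gaussPullback b u v z p :=
  differentiable_integral_of_dominated
    (fun z => (measurable_gaussPullback b hu hv z).aestronglyMeasurable)
    (differentiable_gaussPullback b u v) fun _ =>
    ⟨_, (integrable_exp_neg_mul_sq_norm (by norm_num)).mul_const _, fun _ hz p =>
      norm_gaussPullback_le b (huC p) (hvC p) (hu' p) (hv' p) hz⟩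

/- Along real parameters the integral is constant by a change of variables, at first only while
`id + t • w` is a diffeomorphism; being entire in `t`, it is constant. -/
lemma integral_gauss_comp_eq {w : V → V} {C : ℝ} (hw : Differentiable ℝ w)
    (hC : ∀ p, ‖w p‖ ≤ C) (hw' : ∀ p, ‖fderiv ℝ w p‖ ≤ C) :
    ∫ p, Real.exp (-(1 / 2) * ‖p + w p‖ ^ 2) * (ContinuousLinearMap.id ℝ V + fderiv ℝ w p).det =
      ∫ p : V, Real.exp (-(1 / 2) * ‖p‖ ^ 2) := by
  have hC₀ : 0 ≤ C := (norm_nonneg _).trans (hC 0)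
  let b := stdOrthonormalBasis ℝ V
  have hreal : ∀ t : ℝ, ∫ p, gaussPullback b 0 w t p =
      ((∫ p, Real.exp (-(1 / 2) * ‖p + t • w p‖ ^ 2) *
        (ContinuousLinearMap.id ℝ V + t • fderiv ℝ w p).det : ℝ) : ℂ) := fun t => by
    simp_rw [gaussPullback_ofReal, integral_complex_ofReal, fderiv_zero, Pi.zero_apply, zero_add]
  obtain ⟨ε, hε, hsmall⟩ := exists_forall_norm_fderiv_lt_integral_gauss_comp_eq (V := V)
  have hnear : ∀ᶠ t : ℝ in nhds 0, ∫ p, gaussPullback b 0 w t p =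
      ((∫ p : V, Real.exp (-(1 / 2) * ‖p‖ ^ 2) : ℝ) : ℂ) := by
    have hlim : ∀ᶠ t : ℝ in nhds 0, |t| * C < ε :=
      Continuous.tendsto' (by fun_prop) 0 0 (by simp) |>.eventually (gt_mem_nhds hε)
    filter_upwards [hlim] with t ht
    have hfderiv : ∀ p, fderiv ℝ (t • w) p = t • fderiv ℝ w p := fun p =>
      fderiv_const_smul (hw p) t
    rw [hreal, ← hsmall (t • w) (hw.const_smul t) fun p => ?_]
    · simp_rw [hfderiv, Pi.smul_apply]
    · rw [hfderiv, norm_smul]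
      exact (mul_le_mul_of_nonneg_left (hw' p) (abs_nonneg t)).trans_lt ht
  have hone := eq_of_eventually_eq_ofReal (differentiable_integral_gaussPullback b
    continuous_zero hw.continuous (fun _ => by simpa) hC (fun _ => by simpa) hw') hnear (1 : ℝ)
  rw [hreal, Complex.ofReal_inj] at hone
  simpa only [one_smul] using hone

theorem integral_gaussPullback_eq (b : OrthonormalBasis ι ℝ V) {u v : V → V} {C : ℝ}
    (hu : Differentiable ℝ u) (hv : Differentiable ℝ v) (huC : ∀ p, ‖u p‖ ≤ C)
    (hvC : ∀ p, ‖v p‖ ≤ C) (hu' : ∀ p, ‖fderiv ℝ u p‖ ≤ C) (hv' : ∀ p, ‖fderiv ℝ v p‖ ≤ C)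
    (z : ℂ) : ∫ p, gaussPullback b u v z p =
      ((∫ p : V, Real.exp (-(1 / 2) * ‖p‖ ^ 2) : ℝ) : ℂ) := by
  refine eq_of_eventually_eq_ofReal (differentiable_integral_gaussPullback b hu.continuous
    hv.continuous huC hvC hu' hv') (.of_forall fun t => ?_) z
  have hfderiv : ∀ p, fderiv ℝ (u + t • v) p = fderiv ℝ u p + t • fderiv ℝ v p := fun p => by
    rw [fderiv_add (hu p) ((hv p).const_smul t), fderiv_const_smul (hv p)]
  have hbound : ∀ {x y : V}, ‖x‖ ≤ C → ‖y‖ ≤ C → ‖x + t • y‖ ≤ C + |t| * C := fun hx hy =>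
    (norm_add_le _ _).trans (by rw [norm_smul, Real.norm_eq_abs]; gcongr)
  have hbound' : ∀ {x y : V →L[ℝ] V}, ‖x‖ ≤ C → ‖y‖ ≤ C → ‖x + t • y‖ ≤ C + |t| * C :=
    fun hx hy => (norm_add_le _ _).trans (by rw [norm_smul, Real.norm_eq_abs]; gcongr)
  rw [← integral_gauss_comp_eq (hu.add (hv.const_smul t)) (fun p => hbound (huC p) (hvC p))
    fun p => by rw [hfderiv]; exact hbound' (hu' p) (hv' p)]
  simp_rw [gaussPullback_ofReal, integral_complex_ofReal, hfderiv, Pi.add_apply, Pi.smul_apply]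

end ComplexGaussian

section MonotonePerturbation

variable {E : Type*} [NormedAddCommGroup E]

/-- The map `f` on `E × E`, seen on the Hilbert space `WithLp 2 (E × E)`. -/
def lpConj (f : E × E → E × E) (p : WithLp 2 (E × E)) : WithLp 2 (E × E) :=
  WithLp.toLp 2 (f p.ofLp)

lemma norm_lpConj_le {f : E × E → E × E} {p : WithLp 2 (E × E)} {C : ℝ}
    (h₁ : ‖(f p.ofLp).1‖ ≤ C) (h₂ : ‖(f p.ofLp).2‖ ≤ C) : ‖lpConj f p‖ ≤ 2 * C := by
  have hC : 0 ≤ C := (norm_nonneg _).trans h₁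
  have h₁_sq := pow_le_pow_left₀ (norm_nonneg _) h₁ 2
  have h₂_sq := pow_le_pow_left₀ (norm_nonneg _) h₂ 2
  refine (sq_le_sq₀ (norm_nonneg _) (by positivity)).1 ?_
  rw [lpConj, WithLp.prod_norm_sq_eq_of_L2, WithLp.toLp_fst, WithLp.toLp_snd]
  nlinarith [sq_nonneg C]

variable [InnerProductSpace ℝ E]

/-- The real part of `(x, x') ↦ (g x - I • g x', g x' + I • g x) / 2`, a perturbation of the
identity of `E × E`. -/
def pairRe (g : E → E) : E × E → E × E := fun p => ((1 / 2 : ℝ) • g p.1, (1 / 2 : ℝ) • g p.2)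

/-- The imaginary part of `(x, x') ↦ (g x - I • g x', g x' + I • g x) / 2`; its norm is that of
`pairRe g`, so that the terms quadratic in `g` cancel in the complex Gaussian. -/
def pairIm (g : E → E) : E × E → E × E := fun p => (-((1 / 2 : ℝ) • g p.2), (1 / 2 : ℝ) • g p.1)

lemma hasFDerivAt_lpConj {f : E × E → E × E} {f' : E × E →L[ℝ] E × E} {p : WithLp 2 (E × E)}
    (hf : HasFDerivAt f f' p.ofLp) :
    HasFDerivAt (lpConj f) ((WithLp.prodContinuousLinearEquiv 2 ℝ E E).symm.toContinuousLinearMap ∘L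
      f' ∘L (WithLp.prodContinuousLinearEquiv 2 ℝ E E).toContinuousLinearMap) p :=
  (WithLp.prodContinuousLinearEquiv 2 ℝ E E).symm.hasFDerivAt.comp p
    (hf.comp p (WithLp.prodContinuousLinearEquiv 2 ℝ E E).hasFDerivAt)

lemma norm_fderiv_lpConj_le {f : E × E → E × E} {f' : E × E →L[ℝ] E × E}
    {p : WithLp 2 (E × E)} {C : ℝ} (hC : 0 ≤ C) (hf : HasFDerivAt f f' p.ofLp)
    (h₁ : ∀ q : WithLp 2 (E × E), ‖(f' q.ofLp).1‖ ≤ C * ‖q‖)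
    (h₂ : ∀ q : WithLp 2 (E × E), ‖(f' q.ofLp).2‖ ≤ C * ‖q‖) :
    ‖fderiv ℝ (lpConj f) p‖ ≤ 2 * C := by
  rw [(hasFDerivAt_lpConj hf).fderiv]
  refine ContinuousLinearMap.opNorm_le_bound _ (by positivity) fun q => ?_
  exact (norm_lpConj_le (f := f') (h₁ q) (h₂ q)).trans_eq (mul_assoc _ _ _).symm

variable {g : E → E}

lemma injective_add_sub_reflect (hmono : ∀ x z, 0 ≤ ⟪g x - g z, x - z⟫) (s : E) :
    Function.Injective fun x => (x + g x) - (s - x + g (s - x)) := fun x z hxz => by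
  have hsum : (2 : ℝ) • (x - z) + (g x - g z) + (g (s - z) - g (s - x)) = 0 := by
    rw [← sub_eq_zero.2 hxz]
    module
  have hinner := congrArg (fun v => ⟪v, x - z⟫) hsum
  rw [inner_zero_left, inner_add_left, inner_add_left, inner_smul_left,
    real_inner_self_eq_norm_sq] at hinner
  have hrefl := hmono (s - z) (s - x)
  rw [sub_sub_sub_cancel_left] at hrefl
  have hnorm : ‖x - z‖ ^ 2 = 0 :=
    le_antisymm (by simp only [conj_trivial] at hinner; linarith [hmono x z]) (sq_nonneg _)
  exact sub_eq_zero.1 (norm_eq_zero.1 (pow_eq_zero_iff two_ne_zero |>.1 hnorm))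

lemma hasFDerivAt_pairRe (hg : Differentiable ℝ g) (p : E × E) :
    HasFDerivAt (pairRe g)
      (((1 / 2 : ℝ) • (fderiv ℝ g p.1).comp (ContinuousLinearMap.fst ℝ E E)).prod
        ((1 / 2 : ℝ) • (fderiv ℝ g p.2).comp (ContinuousLinearMap.snd ℝ E E))) p :=
  (((hg p.1).hasFDerivAt.comp p hasFDerivAt_fst).const_smul _).prodMk
    (((hg p.2).hasFDerivAt.comp p hasFDerivAt_snd).const_smul _)

lemma hasFDerivAt_pairIm (hg : Differentiable ℝ g) (p : E × E) :
    HasFDerivAt (pairIm g)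
      ((-((1 / 2 : ℝ) • (fderiv ℝ g p.2).comp (ContinuousLinearMap.snd ℝ E E))).prod
        ((1 / 2 : ℝ) • (fderiv ℝ g p.1).comp (ContinuousLinearMap.fst ℝ E E))) p :=
  (((hg p.2).hasFDerivAt.comp p hasFDerivAt_snd).const_smul _).neg.prodMk
    (((hg p.1).hasFDerivAt.comp p hasFDerivAt_fst).const_smul _)

variable {ι : Type*} [Fintype ι] [DecidableEq ι]

lemma det_complexJacobian_pair
    (b : OrthonormalBasis ι ℝ E) (hg : Differentiable ℝ g) (p : WithLp 2 (E × E)) :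
    (complexJacobian (b.prod b) (lpConj (pairRe g)) (lpConj (pairIm g)) Complex.I p).det =
      ((ContinuousLinearMap.id ℝ E +
        (1 / 2 : ℝ) • (fderiv ℝ g p.fst + fderiv ℝ g p.snd)).det : ℂ) := by
  let A : E → Matrix ι ι ℂ := fun x => Matrix.of fun i j => ((⟪b i, fderiv ℝ g x (b j)⟫ : ℝ) : ℂ)
  let R : Matrix (ι ⊕ ι) ι ℂ := Matrix.fromRows 1 (Complex.I • 1)
  let S : Matrix ι (ι ⊕ ι) ℂ :=
    Matrix.fromCols ((1 / 2 : ℂ) • A p.fst) (-(Complex.I / 2) • A p.snd)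
  have hI : ∀ a : ℂ, Complex.I * (Complex.I / 2 * a) = -(2⁻¹ * a) := fun a => by
    linear_combination a / 2 * Complex.I_mul_I
  have hblock : complexJacobian (b.prod b) (lpConj (pairRe g)) (lpConj (pairIm g)) Complex.I p =
      1 + R * S := by
    rw [Matrix.fromRows_mul_fromCols, complexJacobian,
      (hasFDerivAt_lpConj (hasFDerivAt_pairRe hg _)).fderiv,
      (hasFDerivAt_lpConj (hasFDerivAt_pairIm hg _)).fderiv, ← Matrix.fromBlocks_one]
    ext (i | i) (j | j) <;>
      simp [A, Matrix.one_apply, inner_add_right, inner_smul_right, b.inner_eq_ite, hI,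
        apply_ite Complex.ofReal]
    ring
  rw [hblock, Matrix.det_one_add_mul_comm, Matrix.fromCols_mul_fromRows, ContinuousLinearMap.det,
    ← LinearMap.det_toMatrix b.toBasis, ← Complex.ofRealHom_eq_coe, RingHom.map_det]
  congr 1
  ext i j
  rw [RingHom.mapMatrix_apply, Matrix.map_apply, LinearMap.toMatrix_apply, b.coe_toBasis,
      b.coe_toBasis_repr_apply, b.repr_apply_apply]
  simp [A, Matrix.one_apply, inner_add_right, inner_smul_right, b.inner_eq_ite, hI,
    apply_ite Complex.ofReal]

lemma norm_gaussPullback_pair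
    (b : OrthonormalBasis ι ℝ E) (hg : Differentiable ℝ g) (p : WithLp 2 (E × E)) :
    ‖gaussPullback (b.prod b) (lpConj (pairRe g)) (lpConj (pairIm g)) Complex.I p‖ =
      |(ContinuousLinearMap.id ℝ E +
        (1 / 2 : ℝ) • (fderiv ℝ g p.fst + fderiv ℝ g p.snd)).det| *
      Real.exp (-(1 / 2) * (⟪p.fst, p.fst + g p.fst⟫ + ⟪p.snd, p.snd + g p.snd⟫)) := by
  have hquad : ‖p + lpConj (pairRe g) p‖ ^ 2 - ‖lpConj (pairIm g) p‖ ^ 2 =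
      ⟪p.fst, p.fst + g p.fst⟫ + ⟪p.snd, p.snd + g p.snd⟫ := by
    simp [WithLp.prod_norm_sq_eq_of_L2, lpConj, pairRe, pairIm, norm_add_sq_real,
      inner_add_right, inner_smul_right]
    ring
  rw [gaussPullback, det_complexJacobian_pair b hg, norm_mul, Complex.norm_real, Complex.norm_exp,
    mul_comm, Real.norm_eq_abs, ← hquad]
  congr 2
  simp [Complex.I_sq, sub_eq_add_neg, -Complex.ofReal_pow]

variable [FiniteDimensional ℝ E] [MeasurableSpace E] [BorelSpace E]

lemma integral_gauss_withLp_prod :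
    ∫ p : WithLp 2 (E × E), Real.exp (-(1 / 2) * ‖p‖ ^ 2) =
      (2 * Real.pi) ^ Module.finrank ℝ E := by
  have hrank : Module.finrank ℝ (WithLp 2 (E × E)) = Module.finrank ℝ E * 2 := by
    rw [(WithLp.linearEquiv 2 ℝ (E × E)).finrank_eq, Module.finrank_prod, mul_two]
  rw [GaussianFourier.integral_rexp_neg_mul_sq_norm one_half_pos, hrank, Nat.cast_mul,
    Nat.cast_ofNat, mul_div_cancel_right₀ _ two_ne_zero, Real.rpow_natCast, div_div_eq_mul_div,
    div_one, mul_comm]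

lemma integral_gaussPullback_pair (b : OrthonormalBasis ι ℝ E) (hg : Differentiable ℝ g) {C : ℝ}
    (hC : ∀ x, ‖g x‖ ≤ C) (hg' : ∀ x, ‖fderiv ℝ g x‖ ≤ C) (z : ℂ) :
    ∫ p, gaussPullback (b.prod b) (lpConj (pairRe g)) (lpConj (pairIm g)) z p =
      (((2 * Real.pi) ^ Module.finrank ℝ E : ℝ) : ℂ) := by
  have hC₀ : 0 ≤ C := (norm_nonneg _).trans (hC 0)
  have hhalf : ∀ {x : E} {r : ℝ}, ‖x‖ ≤ r → ‖(1 / 2 : ℝ) • x‖ ≤ r := fun {x r} hx => by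
    rw [norm_smul, Real.norm_of_nonneg one_half_pos.le]
    linarith [norm_nonneg x]
  have hderiv₁ : ∀ (x : E) (q : WithLp 2 (E × E)), ‖fderiv ℝ g x q.fst‖ ≤ C * ‖q‖ := fun x q =>
    (fderiv ℝ g x).le_of_opNorm_le_of_le (hg' x) (WithLp.norm_fst_le _ _)
  have hderiv₂ : ∀ (x : E) (q : WithLp 2 (E × E)), ‖fderiv ℝ g x q.snd‖ ≤ C * ‖q‖ := fun x q =>
    (fderiv ℝ g x).le_of_opNorm_le_of_le (hg' x) (WithLp.norm_snd_le _ _)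
  rw [← integral_gauss_withLp_prod]
  exact integral_gaussPullback_eq (b.prod b) (C := 2 * C)
    (fun p => (hasFDerivAt_lpConj (hasFDerivAt_pairRe hg _)).differentiableAt)
    (fun p => (hasFDerivAt_lpConj (hasFDerivAt_pairIm hg _)).differentiableAt)
    (fun p => norm_lpConj_le (hhalf (hC _)) (hhalf (hC _)))
    (fun p => norm_lpConj_le ((norm_neg _).trans_le (hhalf (hC _))) (hhalf (hC _)))
    (fun p => norm_fderiv_lpConj_le hC₀ (hasFDerivAt_pairRe hg _)
      (fun q => hhalf (hderiv₁ _ q)) (fun q => hhalf (hderiv₂ _ q)))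
    (fun p => norm_fderiv_lpConj_le hC₀ (hasFDerivAt_pairIm hg _)
      (fun q => (norm_neg _).trans_le (hhalf (hderiv₂ _ q))) (fun q => hhalf (hderiv₁ _ q))) z

lemma two_pi_pow_le_lintegral_det (hg : Differentiable ℝ g) {C : ℝ} (hC : ∀ x, ‖g x‖ ≤ C)
    (hg' : ∀ x, ‖fderiv ℝ g x‖ ≤ C) :
    ENNReal.ofReal ((2 * Real.pi) ^ Module.finrank ℝ E) ≤ ∫⁻ q : E × E, ENNReal.ofReal
      (|(ContinuousLinearMap.id ℝ E + (1 / 2 : ℝ) • (fderiv ℝ g q.1 + fderiv ℝ g q.2)).det| *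
      Real.exp (-(1 / 2) * (⟪q.1, q.1 + g q.1⟫ + ⟪q.2, q.2 + g q.2⟫))) := by
  let b := stdOrthonormalBasis ℝ E
  calc ENNReal.ofReal ((2 * Real.pi) ^ Module.finrank ℝ E)
      = ‖∫ p, gaussPullback (b.prod b) (lpConj (pairRe g)) (lpConj (pairIm g)) Complex.I p‖ₑ := by
        rw [integral_gaussPullback_pair b hg hC hg', ← ofReal_norm, Complex.norm_real,
          Real.norm_of_nonneg (by positivity)]
    _ ≤ ∫⁻ p, ‖gaussPullback (b.prod b) (lpConj (pairRe g)) (lpConj (pairIm g)) Complex.I p‖ₑ :=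
        enorm_integral_le_lintegral_enorm _
    _ = _ := by
        simp_rw [← ofReal_norm, norm_gaussPullback_pair b hg]
        exact (WithLp.volume_preserving_ofLp E E).lintegral_comp_emb
          (MeasurableEquiv.toLp 2 (E × E)).symm.measurableEmbedding fun q : E × E => ENNReal.ofReal
            (|(ContinuousLinearMap.id ℝ E +
              (1 / 2 : ℝ) • (fderiv ℝ g q.1 + fderiv ℝ g q.2)).det| *
            Real.exp (-(1 / 2) * (⟪q.1, q.1 + g q.1⟫ + ⟪q.2, q.2 + g q.2⟫)))

lemma lintegral_det_mul_le (hg : Differentiable ℝ g) (hmono : ∀ x z, 0 ≤ ⟪g x - g z, x - z⟫)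
    (h : E → ℝ≥0∞) (s : E) :
    ∫⁻ x, ENNReal.ofReal
        |(ContinuousLinearMap.id ℝ E + (1 / 2 : ℝ) • (fderiv ℝ g x + fderiv ℝ g (s - x))).det| *
      h ((x + g x) - (s - x + g (s - x))) ≤ ∫⁻ y, h y := by
  let φ : E → E := fun x => (x + g x) - (s - x + g (s - x))
  let D : E → E →L[ℝ] E := fun x =>
    ContinuousLinearMap.id ℝ E + (1 / 2 : ℝ) • (fderiv ℝ g x + fderiv ℝ g (s - x))
  have hφ : ∀ x, HasFDerivAt φ ((2 : ℝ) • D x) x := fun x => by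
    have hrefl : HasFDerivAt (fun x : E => s - x) (-ContinuousLinearMap.id ℝ E) x :=
      (hasFDerivAt_id x).const_sub s
    refine (((hasFDerivAt_id x).add (hg x).hasFDerivAt).sub
      (hrefl.add ((hg (s - x)).hasFDerivAt.comp x hrefl))).congr_fderiv ?_
    ext v
    simp [D]
    module
  have hdet : ∀ x, |(D x).det| ≤ |((2 : ℝ) • D x).det| := fun x => by
    rw [ContinuousLinearMap.det, ContinuousLinearMap.det, ContinuousLinearMap.toLinearMap_smul,
      LinearMap.det_smul, abs_mul, abs_pow, abs_two]
    exact le_mul_of_one_le_left (abs_nonneg _) (one_le_pow₀ one_le_two)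
  calc ∫⁻ x, ENNReal.ofReal |(D x).det| * h (φ x)
      ≤ ∫⁻ x in univ, ENNReal.ofReal |((2 : ℝ) • D x).det| * h (φ x) := by
        rw [Measure.restrict_univ]
        exact lintegral_mono fun x => mul_le_mul' (ENNReal.ofReal_le_ofReal (hdet x)) le_rfl
    _ = ∫⁻ y in φ '' univ, h y := (lintegral_image_eq_lintegral_abs_det_fderiv_mul volume
        MeasurableSet.univ (fun x _ => (hφ x).hasFDerivWithinAt)
        (injective_add_sub_reflect hmono s).injOn h).symm
    _ ≤ ∫⁻ y, h y := setLIntegral_le_lintegral _ _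

/- In the variables `x + x'` and `(x + g x) - (x' + g x')` the integrand separates, and the second
variable is an injective function of `x` once the first is fixed. -/
theorem two_pi_pow_le_lintegral_mul_lintegral (hg : Differentiable ℝ g) {C : ℝ}
    (hC : ∀ x, ‖g x‖ ≤ C) (hg' : ∀ x, ‖fderiv ℝ g x‖ ≤ C)
    (hmono : ∀ x z, 0 ≤ ⟪g x - g z, x - z⟫) {h₁ h₂ : E → ℝ≥0∞} (hm₁ : Measurable h₁)
    (hm₂ : Measurable h₂)
    (hh : ∀ x x', ENNReal.ofReal (Real.exp (-(1 / 2) * (⟪x, x + g x⟫ + ⟪x', x' + g x'⟫))) ≤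
      h₁ (x + x') * h₂ ((x + g x) - (x' + g x'))) :
    ENNReal.ofReal ((2 * Real.pi) ^ Module.finrank ℝ E) ≤ (∫⁻ x, h₁ x) * ∫⁻ y, h₂ y := by
  let D : E → E → E →L[ℝ] E := fun x x' =>
    ContinuousLinearMap.id ℝ E + (1 / 2 : ℝ) • (fderiv ℝ g x + fderiv ℝ g x')
  let F : E × E → ℝ≥0∞ := fun q => ENNReal.ofReal |(D q.1 q.2).det| *
    (h₁ (q.1 + q.2) * h₂ ((q.1 + g q.1) - (q.2 + g q.2)))
  have hgm : Measurable g := hg.continuous.measurable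
  have hD : Measurable fun q : E × E => (D q.1 q.2).det :=
    ContinuousLinearMap.continuous_det.measurable.comp (by fun_prop)
  have hFm : Measurable F := by fun_prop
  calc ENNReal.ofReal ((2 * Real.pi) ^ Module.finrank ℝ E) ≤ ∫⁻ q : E × E, F q := by
        refine (two_pi_pow_le_lintegral_det hg hC hg').trans (lintegral_mono fun q => ?_)
        rw [ENNReal.ofReal_mul (abs_nonneg _)]
        exact mul_le_mul_right (hh q.1 q.2) _
    _ = ∫⁻ x, ∫⁻ s, F (x, s - x) := by
        rw [Measure.volume_eq_prod, lintegral_prod _ hFm.aemeasurable]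
        exact lintegral_congr fun x =>
          (lintegral_sub_right_eq_self (fun x' => F (x, x')) x).symm
    _ = ∫⁻ s, ∫⁻ x, F (x, s - x) :=
        lintegral_lintegral_swap (hFm.comp (by fun_prop)).aemeasurable
    _ = ∫⁻ s, h₁ s * ∫⁻ x, ENNReal.ofReal |(D x (s - x)).det| *
          h₂ ((x + g x) - (s - x + g (s - x))) := by
        refine lintegral_congr fun s => ?_
        have hDs : Measurable fun x => (D x (s - x)).det :=
          ContinuousLinearMap.continuous_det.measurable.comp (by fun_prop)
        rw [← lintegral_const_mul _ (by fun_prop)]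
        simp only [F, add_sub_cancel, mul_left_comm]
    _ ≤ ∫⁻ s, h₁ s * ∫⁻ y, h₂ y :=
        lintegral_mono fun s => mul_le_mul' le_rfl (lintegral_det_mul_le hg hmono h₂ s)
    _ = (∫⁻ x, h₁ x) * ∫⁻ y, h₂ y := lintegral_mul_const _ hm₁

end MonotonePerturbation

section Polar

variable {d : ℕ} {S T : Set (Euc d)}

lemma convex_polarSet (S : Set (Euc d)) : Convex ℝ (polarSet S) := by
  intro y hy z hz a b ha hb hab x hx
  rw [inner_add_right, inner_smul_right, inner_smul_right]
  nlinarith [hy x hx, hz x hx]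

lemma neg_mem_polarSet (hs : ∀ v ∈ S, -v ∈ S) : ∀ v ∈ polarSet S, -v ∈ polarSet S :=
  fun y hy x hx => by
    rw [inner_neg_right, ← inner_neg_left]
    exact hy (-x) (hs x hx)

lemma polarSet_anti (h : S ⊆ T) : polarSet T ⊆ polarSet S :=
  fun _ hy x hx => hy x (h hx)

lemma zero_mem_polarSet (S : Set (Euc d)) : (0 : Euc d) ∈ polarSet S :=
  fun x _ => (inner_zero_right x).trans_le zero_le_one

lemma polarSet_smul (S : Set (Euc d)) {r : ℝ} (hr : r ≠ 0) :
    polarSet (r • S) = r⁻¹ • polarSet S := by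
  ext y
  rw [mem_smul_set_iff_inv_smul_mem₀ (inv_ne_zero hr), inv_inv]
  change (∀ x ∈ r • S, ⟪x, y⟫ ≤ 1) ↔ ∀ x ∈ S, ⟪x, r • y⟫ ≤ 1
  simp only [← image_smul, forall_mem_image, real_inner_smul_left, inner_smul_right]

lemma polarSet_mem_nhds (hb : Bornology.IsBounded S) : polarSet S ∈ nhds (0 : Euc d) := by
  obtain ⟨R, hR₀, hR⟩ := hb.exists_pos_norm_le
  refine Filter.mem_of_superset (ball_mem_nhds 0 (inv_pos.2 hR₀)) fun y hy x hx => ?_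
  rw [mem_ball_zero_iff] at hy
  calc ⟪x, y⟫ ≤ ‖x‖ * ‖y‖ := real_inner_le_norm _ _
    _ ≤ R * R⁻¹ := mul_le_mul (hR x hx) hy.le (norm_nonneg _) hR₀.le
    _ = 1 := mul_inv_cancel₀ hR₀.ne'

lemma isCompact_polarSet (h₀ : S ∈ nhds (0 : Euc d)) : IsCompact (polarSet S) := by
  obtain ⟨r, hr, hrS⟩ := Metric.nhds_basis_closedBall.mem_iff.1 h₀
  refine (isCompact_closedBall 0 r⁻¹).of_isClosed_subset (isClosed_polarSet S) fun y hy => ?_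
  rw [mem_closedBall_zero_iff]
  rcases eq_or_ne y 0 with rfl | hy₀
  · rw [norm_zero]
    positivity
  have hmem : (r / ‖y‖) • y ∈ S := hrS <| by
    rw [mem_closedBall_zero_iff, norm_smul, norm_div, norm_norm, Real.norm_of_nonneg hr.le,
      div_mul_cancel₀ _ (norm_ne_zero_iff.2 hy₀)]
  have h := hy _ hmem
  rw [real_inner_smul_left, real_inner_self_eq_norm_sq, pow_two, ← mul_assoc,
    div_mul_cancel₀ _ (norm_ne_zero_iff.2 hy₀)] at h
  exact (le_inv_mul_iff₀ hr).2 h |>.trans_eq (mul_one _)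

lemma polarSet_polarSet_subset (hc : Convex ℝ S) (hS : IsClosed S) (h₀ : (0 : Euc d) ∈ S) :
    polarSet (polarSet S) ⊆ S := by
  intro x hx
  by_contra hxS
  obtain ⟨f, u, hfS, hfx⟩ := geometric_hahn_banach_closed_point hc hS hxS
  have hu : 0 < u := by simpa using hfS 0 h₀
  let w := (InnerProductSpace.toDual ℝ (Euc d)).symm f
  have hw : ∀ v, ⟪w, v⟫ = f v := fun v => InnerProductSpace.toDual_symm_apply
  have hmem : u⁻¹ • w ∈ polarSet S := fun y hy => by
    rw [inner_smul_right, real_inner_comm, hw, inv_mul_le_iff₀ hu, mul_one]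
    exact (hfS y hy).le
  have h := hx _ hmem
  rw [real_inner_smul_left, hw, inv_mul_le_iff₀ hu, mul_one] at h
  exact h.not_gt hfx

lemma gauge_polarSet_le {y : Euc d} {l : ℝ} (hl : 0 ≤ l) (h : ∀ x ∈ S, ⟪x, y⟫ ≤ l) :
    gauge (polarSet S) y ≤ l := by
  refine le_of_forall_pos_le_add fun ε hε => gauge_le_of_mem (by positivity) ?_
  rw [mem_smul_set_iff_inv_smul_mem₀ (by positivity)]
  intro x hx
  rw [inner_smul_right, inv_mul_le_iff₀ (by positivity)]
  linarith [h x hx]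

lemma gauge_polarSet_add_gauge_polarSet_le (hS : (0 : Euc d) ∈ S) (hT : (0 : Euc d) ∈ T)
    {x y : Euc d} {M : ℝ} (h : ∀ s ∈ S, ∀ t ∈ T, ⟪s, x⟫ + ⟪t, y⟫ ≤ M) :
    gauge (polarSet S) x + gauge (polarSet T) y ≤ M := by
  have hx : ∀ t ∈ T, gauge (polarSet S) x ≤ M - ⟪t, y⟫ := fun t ht => by
    have h₀ := h 0 hS t ht
    rw [inner_zero_left] at h₀
    exact gauge_polarSet_le (by linarith) fun s hs => by linarith [h s hs t ht]
  have hy : gauge (polarSet T) y ≤ M - gauge (polarSet S) x := by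
    have h₀ := hx 0 hT
    rw [inner_zero_left] at h₀
    exact gauge_polarSet_le (by linarith) fun t ht => by linarith [hx t ht]
  linarith

lemma volume_real_smul (r : ℝ) (S : Set (Euc d)) :
    volume.real (r • S) = |r ^ d| * volume.real S := by
  rw [measureReal_def, Measure.addHaar_smul, finrank_euclideanSpace_fin, ENNReal.toReal_mul,
    ENNReal.toReal_ofReal (abs_nonneg _), ← measureReal_def]

end Polar

section LaplaceSymmetric

variable {E : Type*} [NormedAddCommGroup E] [InnerProductSpace ℝ E] [FiniteDimensional ℝ E]
  [MeasurableSpace E] [BorelSpace E] {L : Set E}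

lemma laplaceInt_neg (hs : ∀ v ∈ L, -v ∈ L) (x : E) :
    laplaceInt L (-x) = laplaceInt L x := by
  have hpre : (Neg.neg : E → E) ⁻¹' L = L :=
    Subset.antisymm (fun y hy => neg_neg y ▸ hs _ hy) hs
  have h := (Measure.measurePreserving_neg (volume : Measure E)).setIntegral_preimage_emb
    (MeasurableEquiv.neg E).measurableEmbedding (fun y => Real.exp ⟪x, y⟫) L
  simp_rw [hpre, inner_neg_right, ← inner_neg_left] at h
  exact h

lemma log_laplaceInt_le (hL : IsCompact L) (hv : volume L ≠ 0) {x : E} {a : ℝ}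
    (ha : ∀ y ∈ L, ⟪x, y⟫ ≤ a) : Real.log (laplaceInt L x) ≤ Real.log (volume.real L) + a := by
  have hvr : 0 < volume.real L := ENNReal.toReal_pos hv hL.measure_lt_top.ne
  have h : laplaceInt L x ≤ volume.real L * Real.exp a := by
    rw [← smul_eq_mul, ← setIntegral_const]
    exact setIntegral_mono_on (integrableOn_exp_inner hL x)
      (integrableOn_const hL.measure_lt_top.ne) hL.measurableSet fun y hy =>
        Real.exp_le_exp.2 (ha y hy)
  rw [← Real.log_exp a, ← Real.log_mul hvr.ne' (Real.exp_ne_zero _)]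
  exact Real.log_le_log (laplaceInt_pos hL hv _) h

lemma log_volume_le_log_laplaceInt (hL : IsCompact L) (hs : ∀ v ∈ L, -v ∈ L) (hv : volume L ≠ 0)
    (x : E) : Real.log (volume.real L) ≤ Real.log (laplaceInt L x) := by
  have hzero : laplaceInt L 0 = volume.real L := by simp [laplaceInt]
  have h_pos := log_laplaceInt_add_inner_le hL hv 0 x
  have h_neg := log_laplaceInt_add_inner_le hL hv 0 (-x)
  rw [laplaceInt_neg hs, sub_zero, inner_neg_left] at h_neg
  rw [sub_zero] at h_pos
  rw [← hzero]
  linarith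

/- `L` contains its homothetic image `(y₀ + L) / 2`. -/
lemma half_inner_le_log_laplaceInt (hL : IsCompact L) (hc : Convex ℝ L) (hs : ∀ v ∈ L, -v ∈ L)
    (hv : volume L ≠ 0) (x : E) {y₀ : E} (hy₀ : y₀ ∈ L) :
    1 / 2 * ⟪x, y₀⟫ - Module.finrank ℝ E * Real.log 2 + Real.log (volume.real L) ≤
      Real.log (laplaceInt L x) := by
  let f : E → E := fun y => (1 / 2 : ℝ) • (y₀ + y)
  have hf : ∀ y, HasFDerivAt f ((1 / 2 : ℝ) • ContinuousLinearMap.id ℝ E) y := fun y =>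
    ((hasFDerivAt_id y).const_add y₀).const_smul (1 / 2 : ℝ)
  have hinj : Function.Injective f :=
    (smul_right_injective E one_half_pos.ne').comp (add_right_injective y₀)
  have hdet : |((1 / 2 : ℝ) • ContinuousLinearMap.id ℝ E).det| =
      (1 / 2) ^ Module.finrank ℝ E := by
    rw [ContinuousLinearMap.det, ContinuousLinearMap.toLinearMap_smul, LinearMap.det_smul,
      ContinuousLinearMap.coe_id, LinearMap.det_id, mul_one, abs_of_pos (by positivity)]
  have hsub : f '' L ⊆ L := image_subset_iff.2 fun y hy => by
    have h := hc hy₀ hy one_half_pos.le one_half_pos.le (add_halves 1)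
    rwa [← smul_add] at h
  have himage : ∫ y in f '' L, Real.exp ⟪x, y⟫ = (1 / 2) ^ Module.finrank ℝ E *
      Real.exp (1 / 2 * ⟪x, y₀⟫) * laplaceInt L ((1 / 2 : ℝ) • x) := by
    rw [integral_image_eq_integral_abs_det_fderiv_smul volume hL.measurableSet
      (fun y _ => (hf y).hasFDerivWithinAt) hinj.injOn, laplaceInt, ← integral_const_mul]
    refine integral_congr_ae (.of_forall fun y => ?_)
    simp only [f, hdet, smul_eq_mul, mul_assoc, ← Real.exp_add, inner_smul_right,
      inner_add_right, real_inner_smul_left, mul_add]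
  have hle : (1 / 2) ^ Module.finrank ℝ E * Real.exp (1 / 2 * ⟪x, y₀⟫) *
      laplaceInt L ((1 / 2 : ℝ) • x) ≤ laplaceInt L x :=
    himage ▸ setIntegral_mono_set (integrableOn_exp_inner hL x)
      (.of_forall fun y => (Real.exp_pos _).le) hsub.eventuallyLE
  have hpos := laplaceInt_pos hL hv ((1 / 2 : ℝ) • x)
  have hlog := Real.log_le_log (by positivity) hle
  rw [Real.log_mul (by positivity) hpos.ne', Real.log_mul (by positivity) (by positivity),
    Real.log_exp, Real.log_pow, one_div, Real.log_inv] at hlog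
  rw [one_div]
  linarith [log_volume_le_log_laplaceInt hL hs hv ((1 / 2 : ℝ) • x)]

lemma log_laplaceInt_add_inner_sub_le (hL : IsCompact L) (hv : volume L ≠ 0) (x z : E) :
    Real.log (laplaceInt L x) + ⟪z, x + tiltMean L x⟫ - (Real.log (laplaceInt L z) + ‖z‖ ^ 2 / 2) ≤
      ⟪x, x + tiltMean L x⟫ := by
  have hconv := log_laplaceInt_add_inner_le hL hv x z
  have hsq : 0 ≤ ‖x - z‖ ^ 2 := sq_nonneg _
  rw [norm_sub_sq_real] at hsq
  rw [inner_sub_left] at hconv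
  rw [inner_add_right, inner_add_right, real_inner_self_eq_norm_sq, real_inner_comm x z]
  nlinarith [sq_nonneg ‖x‖]

lemma half_inner_add_inner_le (hL : IsCompact L) (hc : Convex ℝ L) (hs : ∀ v ∈ L, -v ∈ L)
    (hv : volume L ≠ 0) {y₀ : E} (hy₀ : y₀ ∈ L) {z : E} {a : ℝ} (ha : ∀ y ∈ L, ⟪z, y⟫ ≤ a)
    (x x' : E) :
    1 / 2 * ⟪y₀, x + x'⟫ + ⟪z, (x + tiltMean L x) - (x' + tiltMean L x')⟫ ≤
      ⟪x, x + tiltMean L x⟫ + ⟪x', x' + tiltMean L x'⟫ +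
        (2 * Module.finrank ℝ E * Real.log 2 + 2 * a + ‖z‖ ^ 2) := by
  have hx := log_laplaceInt_add_inner_sub_le hL hv x z
  have hx' := log_laplaceInt_add_inner_sub_le hL hv x' (-z)
  rw [laplaceInt_neg hs, norm_neg, inner_neg_left] at hx'
  rw [real_inner_comm, inner_add_left, inner_sub_right]
  linarith [log_laplaceInt_le hL hv ha, half_inner_le_log_laplaceInt hL hc hs hv x hy₀,
    half_inner_le_log_laplaceInt hL hc hs hv x' hy₀]

section Gauge

variable {S : Set E} {c : ℝ}

lemma gauge_smul_of_neg_mem {E : Type*} [AddCommGroup E] [Module ℝ E] {S : Set E}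
    (hc : Convex ℝ S) (hs : ∀ v ∈ S, -v ∈ S) (r : ℝ) (x : E) :
    gauge S (r • x) = |r| * gauge S x :=
  gauge_smul ((balanced_iff_neg_mem hc).2 fun {v} => hs v) r x

lemma volume_mul_gauge_lt_one (hS : IsCompact S) (hc : Convex ℝ S) (hs : ∀ v ∈ S, -v ∈ S)
    (h₀ : S ∈ nhds (0 : E)) (hcp : 0 < c) :
    volume {x | c * gauge S x < 1} = ENNReal.ofReal
      ((∫ x, Real.exp (-c * gauge S x)) / (Module.finrank ℝ E).factorial) := by
  have habs : Absorbent ℝ S := absorbent_nhds_zero h₀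
  have h := measure_lt_one_eq_integral_div_gamma (volume : Measure E)
    (g := fun x => c * gauge S x) (p := 1) (by simp) (fun x => by rw [gauge_neg hs])
    (fun x y => by
      rw [← mul_add]
      exact mul_le_mul_of_nonneg_left (gauge_add_le hc habs x y) hcp.le)
    (fun {x} h => (gauge_eq_zero habs (NormedSpace.isVonNBounded_of_isBounded ℝ hS.isBounded)).1
      ((mul_eq_zero_iff_left hcp.ne').1 h))
    (fun r x => by rw [gauge_smul_of_neg_mem hc hs, mul_left_comm]) one_pos
  simpa only [Real.rpow_one, div_one, Real.Gamma_nat_eq_factorial, ← neg_mul] using h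

lemma lintegral_exp_neg_mul_gauge_le (hS : IsCompact S) (hc : Convex ℝ S)
    (hs : ∀ v ∈ S, -v ∈ S) (h₀ : S ∈ nhds (0 : E)) (hcp : 0 < c) :
    ∫⁻ x, ENNReal.ofReal (Real.exp (-c * gauge S x)) ≤
      ENNReal.ofReal ((Module.finrank ℝ E).factorial / c ^ Module.finrank ℝ E * volume.real S) := by
  have hvol := volume_mul_gauge_lt_one hS hc hs h₀ hcp
  have hint : Integrable fun x => Real.exp (-c * gauge S x) := by
    have := continuous_gauge hc h₀
    have hopen : IsOpen {x : E | c * gauge S x < 1} := isOpen_lt (by fun_prop) continuous_const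
    have hpos : 0 < volume {x : E | c * gauge S x < 1} := hopen.measure_pos _ ⟨0, by simp⟩
    by_contra h
    rw [hvol, integral_undef h, zero_div, ENNReal.ofReal_zero] at hpos
    exact hpos.false
  have hsub : {x : E | c * gauge S x < 1} ⊆ c⁻¹ • S := fun x hx => by
    rw [mem_smul_set_iff_inv_smul_mem₀ (inv_ne_zero hcp.ne'), inv_inv]
    refine setOfPred_gauge_lt_one_subset_self hc (mem_of_mem_nhds h₀) (absorbent_nhds_zero h₀) ?_
    rwa [mem_ofPred_eq, gauge_smul_of_neg_mem hc hs, abs_of_pos hcp]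
  have hsmul : volume (c⁻¹ • S) = ENNReal.ofReal (c⁻¹ ^ Module.finrank ℝ E * volume.real S) := by
    rw [Measure.addHaar_smul, abs_of_pos (by positivity), ENNReal.ofReal_mul (by positivity),
      ofReal_measureReal hS.measure_lt_top.ne]
  have hle := measure_mono (μ := volume) hsub
  rw [hvol, hsmul, ENNReal.ofReal_le_ofReal_iff (by positivity), div_le_iff₀ (by positivity)] at hle
  rw [← ofReal_integral_eq_lintegral_ofReal hint (.of_forall fun x => (Real.exp_pos _).le)]
  refine ENNReal.ofReal_le_ofReal (hle.trans_eq ?_)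
  rw [inv_pow]
  field_simp

end Gauge

end LaplaceSymmetric

section BourgainMilman

lemma factorial_le_two_pow_mul_sq_Gamma (n : ℕ) :
    (n.factorial : ℝ) ≤ 2 ^ n * Real.Gamma (n / 2 + 1) ^ 2 := by
  induction n using Nat.twoStepInduction with
  | zero => simp
  | one =>
    rw [Nat.cast_one, Real.Gamma_add_one one_half_pos.ne', Real.Gamma_one_half_eq, mul_pow,
      Real.sq_sqrt Real.pi_pos.le, Nat.factorial_one, Nat.cast_one]
    nlinarith [Real.pi_gt_three]
  | more n ih _ =>
    have hGamma : Real.Gamma ((n + 2 : ℕ) / 2 + 1) = (n / 2 + 1) * Real.Gamma (n / 2 + 1) := by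
      rw [← Real.Gamma_add_one (by positivity)]
      congr 1
      push_cast
      ring
    calc ((n + 2).factorial : ℝ) = (n + 2) * (n + 1) * n.factorial := by
          push_cast [Nat.factorial_succ]
          ring
      _ ≤ (n + 2) * (n + 2) * (2 ^ n * Real.Gamma (n / 2 + 1) ^ 2) := by
          gcongr
          norm_num
      _ = 2 ^ (n + 2) * Real.Gamma ((n + 2 : ℕ) / 2 + 1) ^ 2 := by
          rw [hGamma]
          ring

lemma sq_ωd_mul_factorial_le {d : ℕ} (hd : d ≠ 0) :
    ωd d ^ 2 * d.factorial ≤ (2 * Real.pi) ^ d := by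
  have : Nonempty (Fin d) := ⟨⟨0, Nat.pos_of_ne_zero hd⟩⟩
  have : 0 < Real.Gamma (d / 2 + 1) := Real.Gamma_pos_of_pos (by positivity)
  have hω : ωd d = √Real.pi ^ d / Real.Gamma (d / 2 + 1) := by
    rw [ωd, EuclideanSpace.volume_ball, ENNReal.ofReal_one, one_pow, one_mul, Fintype.card_fin,
      ENNReal.toReal_ofReal (by positivity)]
  rw [hω, div_pow, ← pow_mul, mul_comm d 2, pow_mul, Real.sq_sqrt Real.pi_pos.le, mul_pow,
    div_mul_eq_mul_div, div_le_iff₀ (by positivity), mul_comm (2 ^ d : ℝ), mul_assoc]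
  exact mul_le_mul_of_nonneg_left (factorial_le_two_pow_mul_sq_Gamma d) (by positivity)

variable {d : ℕ} {K : Set (Euc d)}

lemma half_gauge_add_gauge_le (hK : IsCompact K) (hc : Convex ℝ K) (hs : ∀ v ∈ K, -v ∈ K)
    (h₀ : K ∈ nhds (0 : Euc d)) (hsmall : ∀ u ∈ K, 2 * d * ‖u‖ ^ 2 ≤ 1) (x x' : Euc d) :
    1 / 2 * gauge K (x + x') + 2 * d * gauge (polarSet K)
        ((x + tiltMean (polarSet K) x) - (x' + tiltMean (polarSet K) x')) ≤
      ⟪x, x + tiltMean (polarSet K) x⟫ + ⟪x', x' + tiltMean (polarSet K) x'⟫ +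
        (2 * d * Real.log 2 + 6 * d) := by
  have hP₀ := polarSet_mem_nhds hK.isBounded
  have hP := isCompact_polarSet h₀
  have hgauge : gauge K (x + x') ≤ gauge (polarSet (polarSet K)) (x + x') :=
    gauge_mono (absorbent_nhds_zero (polarSet_mem_nhds hP.isBounded))
      (polarSet_polarSet_subset hc hK.isClosed (mem_of_mem_nhds h₀)) _
  have h := gauge_polarSet_add_gauge_polarSet_le (zero_mem_polarSet K) (mem_of_mem_nhds h₀)
    (x := (1 / 2 : ℝ) • (x + x'))
    (y := (2 * d : ℝ) • ((x + tiltMean (polarSet K) x) - (x' + tiltMean (polarSet K) x')))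
    (M := ⟪x, x + tiltMean (polarSet K) x⟫ + ⟪x', x' + tiltMean (polarSet K) x'⟫ +
      (2 * d * Real.log 2 + 6 * d)) fun y₀ hy₀ u hu => by
    have hinner : ∀ y ∈ polarSet K, ⟪(2 * d : ℝ) • u, y⟫ ≤ 2 * d := fun y hy => by
      rw [real_inner_smul_left]
      exact mul_le_of_le_one_right (by positivity) (hy u hu)
    have hnorm : ‖(2 * d : ℝ) • u‖ ^ 2 ≤ 2 * d := by
      rw [norm_smul, mul_pow, Real.norm_of_nonneg (by positivity), pow_two (2 * d : ℝ), mul_assoc]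
      exact mul_le_of_le_one_right (by positivity) (hsmall u hu)
    have hpair := half_inner_add_inner_le hP (convex_polarSet K) (neg_mem_polarSet hs)
      (Measure.measure_pos_of_mem_nhds _ hP₀).ne' hy₀ hinner x x'
    rw [real_inner_smul_left, finrank_euclideanSpace_fin] at hpair
    rw [inner_smul_right, inner_smul_right]
    linarith
  rw [gauge_smul_of_nonneg one_half_pos.le, gauge_smul_of_nonneg (by positivity), smul_eq_mul,
    smul_eq_mul] at h
  linarith

lemma two_pi_pow_le_lintegral_gauge (hK : IsCompact K) (hc : Convex ℝ K) (hs : ∀ v ∈ K, -v ∈ K)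
    (h₀ : K ∈ nhds (0 : Euc d)) (hsmall : ∀ u ∈ K, 2 * d * ‖u‖ ^ 2 ≤ 1) :
    ENNReal.ofReal ((2 * Real.pi) ^ d) ≤ ENNReal.ofReal ((2 * Real.exp 3) ^ d) *
      (∫⁻ x, ENNReal.ofReal (Real.exp (-(1 / 4) * gauge K x))) *
      ∫⁻ y, ENNReal.ofReal (Real.exp (-d * gauge (polarSet K) y)) := by
  have hP := isCompact_polarSet h₀
  have hP₀ := polarSet_mem_nhds hK.isBounded
  have hv : volume (polarSet K) ≠ 0 := (Measure.measure_pos_of_mem_nhds _ hP₀).ne'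
  obtain ⟨R, hR⟩ := hP.isBounded.exists_norm_le
  have := continuous_gauge hc h₀
  have := continuous_gauge (convex_polarSet K) hP₀
  have hexp : Real.exp (d * (Real.log 2 + 3)) = (2 * Real.exp 3) ^ d := by
    rw [Real.exp_nat_mul, Real.exp_add, Real.exp_log two_pos]
  have h := two_pi_pow_le_lintegral_mul_lintegral (g := tiltMean (polarSet K))
    (differentiable_tiltMean hP hv)
    (fun x => (norm_tiltMean_le hP hv hR x).trans (le_max_left _ ((R + R) ^ 2)))
    (fun x => (norm_fderiv_tiltMean_le hP hv hR x).trans (le_max_right _ _))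
    (inner_tiltMean_sub_nonneg hP hv)
    (h₁ := fun x => ENNReal.ofReal ((2 * Real.exp 3) ^ d) *
      ENNReal.ofReal (Real.exp (-(1 / 4) * gauge K x)))
    (h₂ := fun y => ENNReal.ofReal (Real.exp (-d * gauge (polarSet K) y)))
    (by fun_prop) (by fun_prop) fun x x' => by
      rw [← ENNReal.ofReal_mul (by positivity), ← ENNReal.ofReal_mul (by positivity), ← hexp,
        ← Real.exp_add, ← Real.exp_add]
      refine ENNReal.ofReal_le_ofReal (Real.exp_le_exp.2 ?_)
      linarith [half_gauge_add_gauge_le hK hc hs h₀ hsmall x x']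
  rwa [lintegral_const_mul' _ _ ENNReal.ofReal_ne_top, finrank_euclideanSpace_fin] at h

lemma sq_ωd_le_of_norm_sq_le (hd : d ≠ 0) (hK : IsCompact K) (hc : Convex ℝ K)
    (hs : ∀ v ∈ K, -v ∈ K) (h₀ : K ∈ nhds (0 : Euc d)) (hsmall : ∀ u ∈ K, 2 * d * ‖u‖ ^ 2 ≤ 1) :
    ωd d ^ 2 ≤ (8 * Real.exp 3) ^ d * (volume.real K * volume.real (polarSet K)) := by
  have hd₀ : (0 : ℝ) < d := by positivity
  have hle := (two_pi_pow_le_lintegral_gauge hK hc hs h₀ hsmall).trans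
    (mul_le_mul' (mul_le_mul' le_rfl
      (lintegral_exp_neg_mul_gauge_le hK hc hs h₀ (by norm_num : (0 : ℝ) < 1 / 4)))
      (lintegral_exp_neg_mul_gauge_le (isCompact_polarSet h₀) (convex_polarSet K)
        (neg_mem_polarSet hs) (polarSet_mem_nhds hK.isBounded) hd₀))
  rw [← ENNReal.ofReal_mul (by positivity), ← ENNReal.ofReal_mul (by positivity),
    ENNReal.ofReal_le_ofReal_iff (by positivity), finrank_euclideanSpace_fin] at hle
  have hfact : (d.factorial : ℝ) / d ^ d ≤ 1 :=
    (div_le_one (by positivity)).2 (mod_cast Nat.factorial_le_pow d)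
  refine le_of_mul_le_mul_right ?_ (Nat.cast_pos.2 d.factorial_pos)
  calc ωd d ^ 2 * d.factorial ≤ _ := sq_ωd_mul_factorial_le hd
    _ ≤ _ := hle
    _ ≤ (2 * Real.exp 3) ^ d * (d.factorial / (1 / 4) ^ d * volume.real K) *
        (1 * volume.real (polarSet K)) := by gcongr
    _ = _ := by
      rw [one_div, inv_pow, div_inv_eq_mul, show (8 : ℝ) = 2 * 4 by norm_num, mul_pow, mul_pow,
        mul_pow]
      ring

lemma volume_real_smul_mul_volume_real_polarSet_smul (K : Set (Euc d)) {r : ℝ} (hr : r ≠ 0) :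
    volume.real (r • K) * volume.real (polarSet (r • K)) =
      volume.real K * volume.real (polarSet K) := by
  have hcancel : |r ^ d| * |r⁻¹ ^ d| = 1 := by
    rw [← abs_mul, ← mul_pow, mul_inv_cancel₀ hr, one_pow, abs_one]
  rw [polarSet_smul K hr, volume_real_smul, volume_real_smul, mul_mul_mul_comm, hcancel, one_mul]

/-- A weak form of the Bourgain–Milman inequality. -/
theorem sq_ωd_le_volume_mul_volume_polarSet (hd : d ≠ 0) (hK : IsCompact K) (hc : Convex ℝ K)
    (hs : ∀ v ∈ K, -v ∈ K) (h₀ : K ∈ nhds (0 : Euc d)) :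
    ωd d ^ 2 ≤ (8 * Real.exp 3) ^ d * (volume.real K * volume.real (polarSet K)) := by
  obtain ⟨R, hR₀, hR⟩ := hK.isBounded.exists_pos_norm_le
  have hd₁ : (1 : ℝ) ≤ d := mod_cast Nat.one_le_iff_ne_zero.2 hd
  obtain ⟨r, hr, hrR⟩ : ∃ r : ℝ, 0 < r ∧ r * R = (2 * d : ℝ)⁻¹ :=
    ⟨(2 * d : ℝ)⁻¹ / R, by positivity, div_mul_cancel₀ _ hR₀.ne'⟩
  rw [← volume_real_smul_mul_volume_real_polarSet_smul K hr.ne']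
  refine sq_ωd_le_of_norm_sq_le hd (hK.smul r) (hc.smul r) ?_ ?_ ?_
  · rintro _ ⟨v, hv, rfl⟩
    exact ⟨-v, hs v hv, smul_neg r v⟩
  · simpa only [smul_zero] using smul_mem_nhds_smul₀ hr.ne' h₀
  · rintro _ ⟨v, hv, rfl⟩
    have hnorm : ‖r • v‖ ≤ (2 * d : ℝ)⁻¹ := by
      rw [norm_smul, Real.norm_of_nonneg hr.le, ← hrR]
      exact mul_le_mul_of_nonneg_left (hR v hv) hr.le
    calc 2 * d * ‖r • v‖ ^ 2 ≤ 2 * d * ((2 * d : ℝ)⁻¹) ^ 2 := by gcongr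
      _ = (2 * d : ℝ)⁻¹ := by field_simp
      _ ≤ 1 := inv_le_one_of_one_le₀ (by linarith)

end BourgainMilman

section BasedGauge

/-- The gauge of `K - x`, the (nonsymmetric) norm which `K` induces at the base point `x`. -/
def gaugeAt {E : Type*} [AddCommGroup E] [Module ℝ E] (K : Set E) (x v : E) : ℝ :=
  gauge ((fun k => k - x) '' K) v

lemma image_sub_eq_vadd {E : Type*} [AddCommGroup E] (K : Set E) (x : E) :
    (fun k => k - x) '' K = -x +ᵥ K :=
  image_congr fun k _ => sub_eq_neg_add k x

lemma image_sub_mem_nhds_zero {E : Type*} [NormedAddCommGroup E] {K : Set E} {x : E}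
    (hx : x ∈ interior K) : (fun k => k - x) '' K ∈ nhds (0 : E) := by
  rw [image_sub_eq_vadd, ← neg_add_cancel x, ← vadd_eq_add, vadd_mem_nhds_vadd_iff]
  exact mem_interior_iff_mem_nhds.1 hx

section Algebra

variable {E : Type*} [AddCommGroup E] [Module ℝ E] {K : Set E}

lemma gaugeAt_nonneg (x v : E) : 0 ≤ gaugeAt K x v := gauge_nonneg _

lemma gaugeAt_zero (x : E) : gaugeAt K x 0 = 0 := gauge_zero

lemma gaugeAt_smul (x v : E) {t : ℝ} (ht : 0 ≤ t) : gaugeAt K x (t • v) = t * gaugeAt K x v :=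
  gauge_smul_of_nonneg ht v

end Algebra

variable {E : Type*} [NormedAddCommGroup E] [NormedSpace ℝ E] {K : Set E} {x y z v w : E}

lemma convex_image_sub (hc : Convex ℝ K) (x : E) : Convex ℝ ((fun k => k - x) '' K) :=
  image_sub_eq_vadd K x ▸ hc.vadd (-x)

lemma gaugeAt_add_le (hc : Convex ℝ K) (hx : x ∈ interior K) (v w : E) :
    gaugeAt K x (v + w) ≤ gaugeAt K x v + gaugeAt K x w :=
  gauge_add_le (convex_image_sub hc x) (absorbent_nhds_zero (image_sub_mem_nhds_zero hx)) v w

lemma continuous_gaugeAt (hc : Convex ℝ K) (hx : x ∈ interior K) : Continuous (gaugeAt K x) :=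
  continuous_gauge (convex_image_sub hc x) (image_sub_mem_nhds_zero hx)

lemma gaugeAt_lt_one_iff (hc : Convex ℝ K) (hx : x ∈ interior K) :
    gaugeAt K x v < 1 ↔ x + v ∈ interior K := by
  rw [gaugeAt, gauge_lt_one_iff_mem_interior (convex_image_sub hc x) (image_sub_mem_nhds_zero hx),
    image_sub_eq_vadd, interior_vadd, mem_vadd_set_iff_neg_vadd_mem, neg_neg, vadd_eq_add]

lemma gaugeAt_sub_lt_one (hc : Convex ℝ K) (hx : x ∈ interior K) (hy : y ∈ interior K) :
    gaugeAt K x (y - x) < 1 := by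
  rwa [gaugeAt_lt_one_iff hc hx, add_sub_cancel]

/-- By convexity, `K - y` contains `l • (K - x)`. -/
lemma mul_gaugeAt_le_gaugeAt (hc : Convex ℝ K) (hx : x ∈ interior K) (hy : y ∈ interior K)
    {l : ℝ} (hl : 0 < l) (h : gaugeAt K x (y - x) ≤ 1 - l) (v : E) :
    l * gaugeAt K y v ≤ gaugeAt K x v := by
  apply le_of_forall_gt_imp_ge_of_dense
  intro t ht
  have ht₀ : 0 < t := (gaugeAt_nonneg x v).trans_lt ht
  have hlt : gaugeAt K x (y - x + (l / t) • v) < 1 := by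
    refine (gaugeAt_add_le hc hx _ _).trans_lt ?_
    rw [gaugeAt_smul _ _ (by positivity)]
    have : l / t * gaugeAt K x v < l / t * t := by gcongr
    rw [div_mul_cancel₀ _ ht₀.ne'] at this
    linarith
  rw [gaugeAt_lt_one_iff hc hx, ← add_assoc, add_sub_cancel, ← gaugeAt_lt_one_iff hc hy,
    gaugeAt_smul _ _ (by positivity), div_mul_eq_mul_div, div_lt_one ht₀] at hlt
  exact hlt.le

/-- The multiplicative form of the triangle inequality for the Funk distance. -/
lemma one_sub_gaugeAt_mul_le (hc : Convex ℝ K) (hx : x ∈ interior K) (hy : y ∈ interior K)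
    (hz : z ∈ interior K) :
    (1 - gaugeAt K x (y - x)) * (1 - gaugeAt K y (z - y)) ≤ 1 - gaugeAt K x (z - x) := by
  have hxy := gaugeAt_sub_lt_one hc hx hy
  have hxz := gaugeAt_sub_lt_one hc hx hz
  have hl : 0 < 1 - gaugeAt K x (y - x) := by linarith
  suffices h : (gaugeAt K x (z - x) - gaugeAt K x (y - x)) / (1 - gaugeAt K x (y - x)) ≤
      gaugeAt K y (z - y) by
    rw [div_le_iff₀ hl] at h
    linarith
  apply le_of_forall_gt_imp_ge_of_dense
  intro t ht
  have ht₀ : 0 < t := (gaugeAt_nonneg y _).trans_lt ht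
  rw [div_le_iff₀ hl]
  rcases le_total t 1 with ht₁ | ht₁
  · set p := y + t⁻¹ • (z - y) with hp
    have hpK : p ∈ interior K := by
      rw [← gaugeAt_lt_one_iff hc hy, gaugeAt_smul _ _ (by positivity), inv_mul_lt_iff₀ ht₀]
      linarith
    have hcomb : z - x = (1 - t) • (y - x) + t • (p - x) := by
      rw [smul_sub t, hp, smul_add t, smul_smul, mul_inv_cancel₀ ht₀.ne']
      module
    have hadd := gaugeAt_add_le hc hx ((1 - t) • (y - x)) (t • (p - x))
    rw [← hcomb, gaugeAt_smul _ _ (by linarith), gaugeAt_smul _ _ ht₀.le] at hadd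
    nlinarith [gaugeAt_sub_lt_one hc hx hpK]
  · nlinarith

end BasedGauge

section HilbertDistance

variable {d : ℕ} {K : Set (Euc d)} {x y z : Euc d} {r : ℝ}

lemma hilbertDist_eq (K : Set (Euc d)) (x y : Euc d) : hilbertDist K x y =
    -(1 / 2) * Real.log ((1 - gaugeAt K x (y - x)) * (1 - gaugeAt K y (x - y))) := rfl

lemma hilbertDist_self (K : Set (Euc d)) (x : Euc d) : hilbertDist K x x = 0 := by
  simp [hilbertDist_eq, gaugeAt_zero]

lemma hilbertDist_comm (K : Set (Euc d)) (x y : Euc d) :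
    hilbertDist K x y = hilbertDist K y x := by
  rw [hilbertDist_eq, hilbertDist_eq, mul_comm (1 - gaugeAt K x _)]

lemma one_sub_gaugeAt_mul_one_sub_pos (hc : Convex ℝ K) (hx : x ∈ interior K)
    (hy : y ∈ interior K) : 0 < (1 - gaugeAt K x (y - x)) * (1 - gaugeAt K y (x - y)) :=
  mul_pos (sub_pos.2 (gaugeAt_sub_lt_one hc hx hy)) (sub_pos.2 (gaugeAt_sub_lt_one hc hy hx))

lemma hilbertDist_le_iff (hc : Convex ℝ K) (hx : x ∈ interior K) (hy : y ∈ interior K) :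
    hilbertDist K x y ≤ r ↔
      Real.exp (-(2 * r)) ≤ (1 - gaugeAt K x (y - x)) * (1 - gaugeAt K y (x - y)) := by
  rw [← Real.le_log_iff_exp_le (one_sub_gaugeAt_mul_one_sub_pos hc hx hy), hilbertDist_eq]
  constructor <;> intro h <;> linarith

lemma hilbertDist_nonneg (hc : Convex ℝ K) (hx : x ∈ interior K) (hy : y ∈ interior K) :
    0 ≤ hilbertDist K x y := by
  have hprod : (1 - gaugeAt K x (y - x)) * (1 - gaugeAt K y (x - y)) ≤ 1 :=
    mul_le_one₀ (sub_le_self 1 (gaugeAt_nonneg x _))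
      (sub_pos.2 (gaugeAt_sub_lt_one hc hy hx)).le (sub_le_self 1 (gaugeAt_nonneg y _))
  have hlog := Real.log_nonpos (one_sub_gaugeAt_mul_one_sub_pos hc hx hy).le hprod
  rw [hilbertDist_eq]
  linarith

theorem hilbertDist_triangle (hc : Convex ℝ K) (hx : x ∈ interior K) (hy : y ∈ interior K)
    (hz : z ∈ interior K) : hilbertDist K x z ≤ hilbertDist K x y + hilbertDist K y z := by
  have hxy := one_sub_gaugeAt_mul_one_sub_pos hc hx hy
  have hyz := one_sub_gaugeAt_mul_one_sub_pos hc hy hz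
  have hyx : 0 ≤ 1 - gaugeAt K y (x - y) := sub_nonneg.2 (gaugeAt_sub_lt_one hc hy hx).le
  have hzy : 0 ≤ 1 - gaugeAt K z (y - z) := sub_nonneg.2 (gaugeAt_sub_lt_one hc hz hy).le
  have hxz : 0 ≤ 1 - gaugeAt K x (z - x) := sub_nonneg.2 (gaugeAt_sub_lt_one hc hx hz).le
  have hmul : ((1 - gaugeAt K x (y - x)) * (1 - gaugeAt K y (x - y))) *
      ((1 - gaugeAt K y (z - y)) * (1 - gaugeAt K z (y - z))) ≤
        (1 - gaugeAt K x (z - x)) * (1 - gaugeAt K z (x - z)) :=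
    calc _ = ((1 - gaugeAt K x (y - x)) * (1 - gaugeAt K y (z - y))) *
          ((1 - gaugeAt K z (y - z)) * (1 - gaugeAt K y (x - y))) := by ring
      _ ≤ _ := mul_le_mul (one_sub_gaugeAt_mul_le hc hx hy hz)
        (one_sub_gaugeAt_mul_le hc hz hy hx) (mul_nonneg hzy hyx) hxz
  have hlog := Real.log_le_log (mul_pos hxy hyz) hmul
  rw [Real.log_mul hxy.ne' hyz.ne'] at hlog
  simp only [hilbertDist_eq]
  linarith

lemma gaugeAt_sub_le_of_hilbertDist_le (hc : Convex ℝ K) (hx : x ∈ interior K)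
    (hy : y ∈ interior K) (h : hilbertDist K x y ≤ r) :
    gaugeAt K x (y - x) ≤ 1 - Real.exp (-(2 * r)) := by
  rw [hilbertDist_le_iff hc hx hy] at h
  nlinarith [gaugeAt_sub_lt_one hc hx hy, gaugeAt_nonneg (K := K) y (x - y)]

end HilbertDistance

section FinslerBall

variable {d : ℕ} {K : Set (Euc d)} {x y v : Euc d} {a : ℝ}

lemma mem_finslerBall : v ∈ finslerBall K x ↔ gaugeAt K x v + gaugeAt K x (-v) ≤ 2 := Iff.rfl

lemma mem_smul_finslerBall (ha : 0 < a) :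
    v ∈ a • finslerBall K x ↔ gaugeAt K x v + gaugeAt K x (-v) ≤ 2 * a := by
  have ha' : 0 ≤ a⁻¹ := inv_nonneg.2 ha.le
  rw [mem_smul_set_iff_inv_smul_mem₀ ha.ne', mem_finslerBall, ← smul_neg, gaugeAt_smul _ _ ha',
    gaugeAt_smul _ _ ha', ← mul_add, inv_mul_le_iff₀ ha, mul_comm]

lemma neg_mem_finslerBall : ∀ v ∈ finslerBall K x, -v ∈ finslerBall K x := by
  intro v hv
  rwa [mem_finslerBall, neg_neg, add_comm]

lemma convex_finslerBall (hc : Convex ℝ K) (hx : x ∈ interior K) :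
    Convex ℝ (finslerBall K x) := by
  intro v hv w hw a b ha hb hab
  rw [mem_finslerBall] at *
  have hpos := gaugeAt_add_le hc hx (a • v) (b • w)
  have hneg := gaugeAt_add_le hc hx (a • -v) (b • -w)
  rw [gaugeAt_smul _ _ ha, gaugeAt_smul _ _ hb] at hpos hneg
  rw [neg_add, ← smul_neg, ← smul_neg]
  nlinarith

lemma finslerBall_mem_nhds_zero (hc : Convex ℝ K) (hx : x ∈ interior K) :
    finslerBall K x ∈ nhds (0 : Euc d) := by
  have hcont := continuous_gaugeAt hc hx
  have hopen : IsOpen {v | gaugeAt K x v + gaugeAt K x (-v) < 2} :=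
    isOpen_lt (by fun_prop) continuous_const
  exact Filter.mem_of_superset (hopen.mem_nhds (by simp [gaugeAt_zero]))
    fun v hv => mem_finslerBall.2 (le_of_lt hv)

lemma finslerBall_subset (hc : Convex ℝ K) (hx : x ∈ interior K) :
    finslerBall K x ⊆ (3 : ℝ) • (-x +ᵥ K) := by
  intro v hv
  rw [mem_finslerBall] at hv
  have hlt : gaugeAt K x ((3 : ℝ)⁻¹ • v) < 1 := by
    rw [gaugeAt_smul _ _ (by norm_num)]
    linarith [gaugeAt_nonneg (K := K) x (-v)]
  rw [mem_smul_set_iff_inv_smul_mem₀ three_ne_zero, mem_vadd_set_iff_neg_vadd_mem, neg_neg]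
  exact interior_subset ((gaugeAt_lt_one_iff hc hx).1 hlt)

lemma isCompact_finslerBall (hc : Convex ℝ K) (hb : Bornology.IsBounded K)
    (hx : x ∈ interior K) : IsCompact (finslerBall K x) := by
  have hcont := continuous_gaugeAt hc hx
  have hclosed : IsClosed (finslerBall K x) :=
    isClosed_le (f := fun v => gaugeAt K x v + gaugeAt K x (-v)) (by fun_prop) continuous_const
  exact isCompact_of_isClosed_isBounded hclosed
    (((hb.vadd (-x)).smul₀ (3 : ℝ)).subset (finslerBall_subset hc hx))

lemma hilbertBall_subset_vadd_smul_finslerBall (hc : Convex ℝ K) (hx : x ∈ interior K)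
    (ha : 0 < a) (ha₁ : a ≤ 1) : hilbertBall K x a ⊆ x +ᵥ (10 * a) • finslerBall K x := by
  rintro y ⟨hy, h⟩
  have hexp : 1 - 2 * a ≤ Real.exp (-(2 * a)) := by
    linarith [Real.add_one_le_exp (-(2 * a))]
  have hexp' : Real.exp (2 * a) ≤ 8 :=
    calc Real.exp (2 * a) ≤ Real.exp 1 ^ 2 := by
          rw [← Real.exp_nat_mul]
          gcongr
          push_cast
          linarith
      _ ≤ 8 := by nlinarith [Real.exp_one_lt_d9, Real.exp_pos 1]
  have hxy : gaugeAt K x (y - x) ≤ 2 * a := by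
    linarith [gaugeAt_sub_le_of_hilbertDist_le hc hx hy h]
  have hyx := gaugeAt_sub_le_of_hilbertDist_le hc hy hx ((hilbertDist_comm K y x).trans_le h)
  have hback : gaugeAt K x (x - y) ≤ 16 * a := by
    have hchange := mul_gaugeAt_le_gaugeAt hc hy hx (Real.exp_pos _) hyx (x - y)
    rw [Real.exp_neg, inv_mul_le_iff₀ (Real.exp_pos _)] at hchange
    nlinarith [gaugeAt_nonneg (K := K) y (x - y)]
  rw [mem_vadd_set_iff_neg_vadd_mem, vadd_eq_add, neg_add_eq_sub,
    mem_smul_finslerBall (by positivity), neg_sub]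
  linarith

lemma vadd_smul_finslerBall_subset_hilbertBall (hc : Convex ℝ K) (hx : x ∈ interior K)
    (ha : 0 < a) (ha₁ : a ≤ 1) : x +ᵥ (a / 8) • finslerBall K x ⊆ hilbertBall K x (a / 2) := by
  rintro _ ⟨v, hv, rfl⟩
  rw [mem_smul_finslerBall (by positivity)] at hv
  have := gaugeAt_nonneg (K := K) x v
  have := gaugeAt_nonneg (K := K) x (-v)
  have hy : x + v ∈ interior K := (gaugeAt_lt_one_iff hc hx).1 (by linarith)
  refine ⟨hy, ?_⟩
  simp only [vadd_eq_add]
  have hl : 0 < 1 - gaugeAt K x v := by linarith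
  have hchange := mul_gaugeAt_le_gaugeAt hc hx hy hl (by simp) (-v)
  have hexp : Real.exp (-(2 * (a / 2))) ≤ 1 - a / 4 := by
    rw [Real.exp_neg, inv_le_iff_one_le_mul₀ (Real.exp_pos _)]
    nlinarith [Real.add_one_le_exp (2 * (a / 2))]
  rw [hilbertDist_le_iff hc hx hy, sub_add_cancel_left, add_sub_cancel_left]
  nlinarith

end FinslerBall

section Density

variable {d : ℕ} {K : Set (Euc d)} {x y : Euc d} {r : ℝ}

/-- The Lebesgue density, up to the factor `1 / ω_d`, of the Hilbert Holmes–Thompson volume. -/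
def htDensity (K : Set (Euc d)) (x : Euc d) : ℝ := volume.real (polarSet (finslerBall K x))

lemma volH_eq (K U : Set (Euc d)) : volH K U = (ωd d)⁻¹ * ∫ y in U, htDensity K y := by
  rw [← one_div]
  rfl

lemma htDensity_nonneg (x : Euc d) : 0 ≤ htDensity K x := measureReal_nonneg

lemma volH_nonneg (K U : Set (Euc d)) : 0 ≤ volH K U := by
  rw [volH_eq]
  exact mul_nonneg (inv_nonneg.2 (ωd_pos d).le) (integral_nonneg htDensity_nonneg)

lemma volume_real_vadd_smul (x : Euc d) (hr : 0 ≤ r) (S : Set (Euc d)) :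
    volume.real (x +ᵥ r • S) = r ^ d * volume.real S := by
  rw [measureReal_def, measure_vadd, ← measureReal_def, volume_real_smul,
    abs_of_nonneg (pow_nonneg hr d)]

lemma pow_mul_htDensity_le (hc : Convex ℝ K) (hx : x ∈ interior K) (hy : y ∈ interior K)
    {l : ℝ} (hl : 0 < l) (h : gaugeAt K x (y - x) ≤ 1 - l) :
    l ^ d * htDensity K y ≤ htDensity K x := by
  have hsub : l • finslerBall K x ⊆ finslerBall K y := by
    intro v hv
    rw [mem_smul_finslerBall hl] at hv
    have hv₁ := mul_gaugeAt_le_gaugeAt hc hx hy hl h v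
    have hv₂ := mul_gaugeAt_le_gaugeAt hc hx hy hl h (-v)
    rw [mem_finslerBall]
    nlinarith
  have hpolar := polarSet_anti hsub
  rw [polarSet_smul _ hl.ne'] at hpolar
  have hmono := measureReal_mono (μ := volume) hpolar
    ((isCompact_polarSet (finslerBall_mem_nhds_zero hc hx)).smul l⁻¹).measure_lt_top.ne
  rwa [volume_real_smul, abs_of_pos (by positivity), inv_pow, ← div_eq_inv_mul,
    le_div_iff₀' (by positivity)] at hmono

lemma htDensity_le_of_hilbertDist_le (hc : Convex ℝ K) (hx : x ∈ interior K)
    (hy : y ∈ interior K) (h : hilbertDist K x y ≤ r) :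
    htDensity K y ≤ Real.exp (2 * r) ^ d * htDensity K x := by
  have hpow := pow_mul_htDensity_le hc hx hy (Real.exp_pos _)
    (gaugeAt_sub_le_of_hilbertDist_le hc hx hy h)
  rwa [Real.exp_neg, inv_pow, inv_mul_le_iff₀ (by positivity)] at hpow

lemma continuousOn_htDensity (hc : Convex ℝ K) : ContinuousOn (htDensity K) (interior K) := by
  intro x hx
  refine ContinuousAt.continuousWithinAt ?_
  have hcont := continuous_gaugeAt hc hx
  set φ : Euc d → ℝ := fun y => 1 - gaugeAt K x (y - x)
  set ψ : Euc d → ℝ := fun y => 1 - gaugeAt K x (x - y) / φ y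
  have hφ : ContinuousAt φ x := Continuous.continuousAt (by fun_prop)
  have hφx : φ x = 1 := by simp [φ, gaugeAt_zero]
  have hψ : ContinuousAt ψ x :=
    continuousAt_const.sub ((Continuous.continuousAt (by fun_prop)).div hφ (by simp [hφx]))
  have hψx : ψ x = 1 := by simp [ψ, gaugeAt_zero]
  have hlower : Filter.Tendsto (fun y => ψ y ^ d * htDensity K x) (nhds x)
      (nhds (htDensity K x)) := by
    simpa [hψx] using (hψ.pow d).tendsto.mul_const (htDensity K x)
  have hupper : Filter.Tendsto (fun y => htDensity K x / φ y ^ d) (nhds x)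
      (nhds (htDensity K x)) := by
    have hinv := ((hφ.pow d).inv₀ (by simp [hφx])).tendsto.const_mul (htDensity K x)
    simpa [hφx, div_eq_mul_inv] using hinv
  refine tendsto_of_tendsto_of_tendsto_of_le_of_le' hlower hupper ?_ ?_
  · filter_upwards [hψ.eventually_const_lt (hψx ▸ one_pos), isOpen_interior.mem_nhds hx]
      with y hψy hy
    have hφy : 0 < φ y := sub_pos.2 (gaugeAt_sub_lt_one hc hx hy)
    refine pow_mul_htDensity_le hc hy hx hψy ?_
    rw [sub_sub_cancel, le_div_iff₀' hφy]
    exact mul_gaugeAt_le_gaugeAt hc hx hy hφy (by simp [φ]) (x - y)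
  · filter_upwards [isOpen_interior.mem_nhds hx] with y hy
    have hφy : 0 < φ y := sub_pos.2 (gaugeAt_sub_lt_one hc hx hy)
    rw [le_div_iff₀' (pow_pos hφy d)]
    exact pow_mul_htDensity_le hc hx hy hφy (by simp [φ])

lemma exists_htDensity_le_on_hilbertExpand {G : Set (Euc d)} (hc : Convex ℝ K)
    (hG : IsCompact G) (hne : G.Nonempty) (hGK : G ⊆ interior K) (r : ℝ) :
    ∃ M, ∀ y ∈ hilbertExpand K G r, htDensity K y < M := by
  obtain ⟨B, hB⟩ := hG.bddAbove_image ((continuousOn_htDensity hc).mono hGK)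
  refine ⟨Real.exp (2 * (r + 1)) ^ d * B + 1, ?_⟩
  rintro y ⟨hy, hdist⟩
  obtain ⟨_, ⟨g, hg, rfl⟩, hlt⟩ :=
    exists_lt_of_csInf_lt (hne.image _) (hdist.trans_lt (lt_add_one r))
  rw [hilbertDist_comm] at hlt
  refine ((htDensity_le_of_hilbertDist_le hc (hGK hg) hy hlt.le).trans ?_).trans_lt (lt_add_one _)
  gcongr
  exact hB (mem_image_of_mem _ hg)

lemma integrableOn_htDensity_hilbertExpand {G : Set (Euc d)} (hc : Convex ℝ K)
    (hb : Bornology.IsBounded K) (hG : IsCompact G) (hne : G.Nonempty) (hGK : G ⊆ interior K)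
    (r : ℝ) : IntegrableOn (htDensity K) (hilbertExpand K G r) := by
  obtain ⟨M, hM⟩ := exists_htDensity_le_on_hilbertExpand hc hG hne hGK r
  have hcont := continuousOn_htDensity hc
  have hmeas : MeasurableSet (interior K ∩ htDensity K ⁻¹' Iio M) :=
    (hcont.isOpen_inter_preimage isOpen_interior isOpen_Iio).measurableSet
  have hfin : volume (interior K ∩ htDensity K ⁻¹' Iio M) < ⊤ :=
    (hb.subset (inter_subset_left.trans interior_subset)).measure_lt_top
  have hint : IntegrableOn (htDensity K) (interior K ∩ htDensity K ⁻¹' Iio M) := by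
    refine .of_bound hfin ((hcont.mono inter_subset_left).aestronglyMeasurable hmeas) M ?_
    refine (ae_restrict_iff' hmeas).2 (.of_forall fun y hy => ?_)
    rw [Real.norm_of_nonneg (htDensity_nonneg y)]
    exact hy.2.le
  exact hint.mono_set fun y hy => ⟨hy.1, hM y hy⟩

lemma volume_finslerBall_mul_htDensity_le (hd : d ≠ 0) (hc : Convex ℝ K)
    (hb : Bornology.IsBounded K) (hx : x ∈ interior K) :
    volume.real (finslerBall K x) * htDensity K x ≤ (8 * Real.exp 4) ^ d * ωd d ^ 2 :=
  volume_mul_volume_polarSet_le hd (isCompact_finslerBall hc hb hx) (convex_finslerBall hc hx)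
    neg_mem_finslerBall
    (Measure.measure_pos_of_mem_nhds _ (finslerBall_mem_nhds_zero hc hx)).ne'

lemma sq_ωd_le_volume_finslerBall_mul_htDensity (hd : d ≠ 0) (hc : Convex ℝ K)
    (hb : Bornology.IsBounded K) (hx : x ∈ interior K) :
    ωd d ^ 2 ≤ (8 * Real.exp 3) ^ d * (volume.real (finslerBall K x) * htDensity K x) :=
  sq_ωd_le_volume_mul_volume_polarSet hd (isCompact_finslerBall hc hb hx)
    (convex_finslerBall hc hx) neg_mem_finslerBall (finslerBall_mem_nhds_zero hc hx)

end Density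

section Covering

variable {d : ℕ} {K G : Set (Euc d)} {x : Euc d} {a : ℝ}

lemma lintegral_htDensity_hilbertBall_le (hd : d ≠ 0) (hc : Convex ℝ K)
    (hb : Bornology.IsBounded K) (hx : x ∈ interior K) (ha : 0 < a) (ha₁ : a ≤ 1) :
    ∫⁻ y in hilbertBall K x a, ‖htDensity K y‖ₑ ≤
      ENNReal.ofReal ((80 * Real.exp 6 * a) ^ d * ωd d ^ 2) := by
  have hfin : volume (x +ᵥ (10 * a) • finslerBall K x) ≠ ⊤ :=
    (((isCompact_finslerBall hc hb hx).smul (10 * a)).vadd x).measure_lt_top.ne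
  have hx₀ := htDensity_nonneg (K := K) x
  calc ∫⁻ y in hilbertBall K x a, ‖htDensity K y‖ₑ
      ≤ ∫⁻ _ in hilbertBall K x a, ENNReal.ofReal (Real.exp 2 ^ d * htDensity K x) := by
        refine setLIntegral_mono measurable_const fun y hy => ?_
        rw [Real.enorm_of_nonneg (htDensity_nonneg y)]
        refine ENNReal.ofReal_le_ofReal
          ((htDensity_le_of_hilbertDist_le hc hx hy.1 hy.2).trans ?_)
        gcongr
        linarith
    _ ≤ ENNReal.ofReal (Real.exp 2 ^ d * htDensity K x) *
          volume (x +ᵥ (10 * a) • finslerBall K x) := by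
        rw [setLIntegral_const]
        gcongr
        exact hilbertBall_subset_vadd_smul_finslerBall hc hx ha ha₁
    _ = ENNReal.ofReal (Real.exp 2 ^ d * (10 * a) ^ d *
          (volume.real (finslerBall K x) * htDensity K x)) := by
        rw [← ofReal_measureReal hfin, ← ENNReal.ofReal_mul (by positivity),
          volume_real_vadd_smul x (by positivity)]
        ring_nf
    _ ≤ ENNReal.ofReal (Real.exp 2 ^ d * (10 * a) ^ d *
          ((8 * Real.exp 4) ^ d * ωd d ^ 2)) := by
        refine ENNReal.ofReal_le_ofReal (mul_le_mul_of_nonneg_left ?_ (by positivity))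
        exact volume_finslerBall_mul_htDensity_le hd hc hb hx
    _ = _ := by
        rw [show (6 : ℝ) = 2 + 4 by norm_num, Real.exp_add, ← mul_assoc, ← mul_pow, ← mul_pow]
        ring_nf

theorem volH_le_of_subset_iUnion_hilbertBall (hd : d ≠ 0) (hc : Convex ℝ K)
    (hb : Bornology.IsBounded K) (ha : 0 < a) (ha₁ : a ≤ 1) {m : ℕ} {x : Fin m → Euc d}
    (hx : ∀ i, x i ∈ interior K) (hcov : G ⊆ ⋃ i, hilbertBall K (x i) a) :
    volH K G ≤ m * ((80 * Real.exp 6) ^ d * (ωd d * a ^ d)) := by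
  have hω := ωd_pos d
  have hlint := calc ‖∫ y in G, htDensity K y‖ₑ
      ≤ ∫⁻ y in G, ‖htDensity K y‖ₑ := enorm_integral_le_lintegral_enorm _
    _ ≤ ∫⁻ y in ⋃ i, hilbertBall K (x i) a, ‖htDensity K y‖ₑ := lintegral_mono_set hcov
    _ ≤ ∑' i, ∫⁻ y in hilbertBall K (x i) a, ‖htDensity K y‖ₑ := lintegral_iUnion_le _ _
    _ ≤ ∑' _ : Fin m, ENNReal.ofReal ((80 * Real.exp 6 * a) ^ d * ωd d ^ 2) :=
        ENNReal.tsum_le_tsum fun i =>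
          lintegral_htDensity_hilbertBall_le hd hc hb (hx i) ha ha₁
    _ = ENNReal.ofReal (m * ((80 * Real.exp 6 * a) ^ d * ωd d ^ 2)) := by
        rw [tsum_fintype, Finset.sum_const, Finset.card_univ, Fintype.card_fin, nsmul_eq_mul,
          ENNReal.ofReal_mul m.cast_nonneg, ENNReal.ofReal_natCast]
  rw [Real.enorm_of_nonneg (integral_nonneg fun y => htDensity_nonneg y),
    ENNReal.ofReal_le_ofReal_iff (by positivity)] at hlint
  rw [volH_eq, inv_mul_le_iff₀ hω]
  refine hlint.trans_eq ?_
  rw [mul_pow]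
  ring

lemma exists_fin_cover_of_finset {T : Finset (Euc d)} (hT : ↑T ⊆ interior K)
    (hG : G ⊆ interior K) (hcov : ∀ g ∈ G, ∃ t ∈ T, hilbertDist K t g ≤ a) :
    ∃ x : Fin T.card → Euc d, (∀ i, x i ∈ interior K) ∧ G ⊆ ⋃ i, hilbertBall K (x i) a := by
  refine ⟨fun i => T.equivFin.symm i, fun i => hT (T.equivFin.symm i).2, fun g hg => ?_⟩
  obtain ⟨t, ht, hdist⟩ := hcov g hg
  refine mem_iUnion.2 ⟨T.equivFin ⟨t, ht⟩, hG hg, ?_⟩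
  simpa only [Equiv.symm_apply_apply] using hdist

end Covering

section Packing

variable {d : ℕ} {K G : Set (Euc d)} {x : Euc d} {a : ℝ}

/-- `T` is `a`-separated for the Hilbert distance of `K`. `Metric.IsSeparated` does not apply, the
Hilbert distance being a plain function. -/
def IsHilbertSeparated (K : Set (Euc d)) (a : ℝ) (T : Set (Euc d)) : Prop :=
  T.Pairwise fun s t => a < hilbertDist K s t

lemma hilbertBall_subset_hilbertExpand (hc : Convex ℝ K) (hGK : G ⊆ interior K) (hx : x ∈ G) :
    hilbertBall K x a ⊆ hilbertExpand K G a := by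
  rintro y ⟨hy, hdist⟩
  have hbdd : BddBelow (hilbertDist K y '' G) :=
    ⟨0, forall_mem_image.2 fun g hg => hilbertDist_nonneg hc hy (hGK hg)⟩
  exact ⟨hy, (csInf_le hbdd (mem_image_of_mem _ hx)).trans
    ((hilbertDist_comm K y x).trans_le hdist)⟩

lemma disjoint_hilbertBall (hc : Convex ℝ K) {y : Euc d} (hx : x ∈ interior K)
    (hy : y ∈ interior K) (h : a < hilbertDist K x y) :
    Disjoint (hilbertBall K x (a / 2)) (hilbertBall K y (a / 2)) := by
  refine Set.disjoint_left.2 ?_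
  rintro z ⟨hz, hxz⟩ ⟨-, hyz⟩
  rw [hilbertDist_comm] at hyz
  linarith [hilbertDist_triangle hc hx hz hy]

lemma le_setIntegral_htDensity (hd : d ≠ 0) (hc : Convex ℝ K) (hb : Bornology.IsBounded K)
    (hx : x ∈ interior K) (ha : 0 < a) (ha₁ : a ≤ 1)
    (hint : IntegrableOn (htDensity K) (x +ᵥ (a / 8) • finslerBall K x)) :
    ωd d ^ 2 * a ^ d ≤
      (64 * Real.exp 4) ^ d * ∫ y in x +ᵥ (a / 8) • finslerBall K x, htDensity K y := by
  have hcompact : IsCompact (x +ᵥ (a / 8) • finslerBall K x) :=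
    ((isCompact_finslerBall hc hb hx).smul (a / 8)).vadd x
  have := htDensity_nonneg (K := K) x
  have hconst : ∀ y ∈ x +ᵥ (a / 8) • finslerBall K x,
      (Real.exp 1 ^ d)⁻¹ * htDensity K x ≤ htDensity K y := by
    intro y hy
    obtain ⟨hyK, hdist⟩ := vadd_smul_finslerBall_subset_hilbertBall hc hx ha ha₁ hy
    rw [hilbertDist_comm] at hdist
    rw [inv_mul_le_iff₀ (by positivity)]
    refine (htDensity_le_of_hilbertDist_le hc hyK hx
      (r := 1 / 2) (by linarith)).trans_eq ?_
    norm_num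
  have hlower := setIntegral_ge_of_const_le_real hcompact.measurableSet
    hcompact.measure_lt_top.ne hconst hint
  rw [volume_real_vadd_smul x (by positivity)] at hlower
  calc ωd d ^ 2 * a ^ d
      ≤ (8 * Real.exp 3) ^ d * (volume.real (finslerBall K x) * htDensity K x) * a ^ d := by
        gcongr
        exact sq_ωd_le_volume_finslerBall_mul_htDensity hd hc hb hx
    _ = (64 * Real.exp 4) ^ d * ((Real.exp 1 ^ d)⁻¹ * htDensity K x *
          ((a / 8) ^ d * volume.real (finslerBall K x))) := by
        have hpow : (8 * Real.exp 3) ^ d * a ^ d =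
            (64 * Real.exp 4) ^ d * (Real.exp 1 ^ d)⁻¹ * (a / 8) ^ d := by
          rw [show (4 : ℝ) = 3 + 1 by norm_num, Real.exp_add, ← inv_pow, ← mul_pow, ← mul_pow,
            ← mul_pow]
          congr 1
          field_simp
          norm_num
        linear_combination (volume.real (finslerBall K x) * htDensity K x) * hpow
    _ ≤ _ := by gcongr

theorem card_mul_le_volH_hilbertExpand (hd : d ≠ 0) (hc : Convex ℝ K)
    (hb : Bornology.IsBounded K) (hG : IsCompact G) (hne : G.Nonempty) (hGK : G ⊆ interior K)
    (ha : 0 < a) (ha₁ : a ≤ 1) {T : Finset (Euc d)} (hTG : ↑T ⊆ G)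
    (hT : IsHilbertSeparated K a T) :
    T.card * (ωd d * a ^ d) ≤ (64 * Real.exp 4) ^ d * volH K (hilbertExpand K G a) := by
  set U : Euc d → Set (Euc d) := fun t => t +ᵥ (a / 8) • finslerBall K t
  have hint := integrableOn_htDensity_hilbertExpand hc hb hG hne hGK a
  have hball : ∀ t ∈ T, U t ⊆ hilbertBall K t (a / 2) := fun t ht =>
    vadd_smul_finslerBall_subset_hilbertBall hc (hGK (hTG ht)) ha ha₁
  have hexpand : ∀ t ∈ T, U t ⊆ hilbertExpand K G a := fun t ht y hy =>
    hilbertBall_subset_hilbertExpand hc hGK (hTG ht)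
      ⟨(hball t ht hy).1, (hball t ht hy).2.trans (half_le_self ha.le)⟩
  have hmeas : ∀ t ∈ T, MeasurableSet (U t) := fun t ht =>
    (((isCompact_finslerBall hc hb (hGK (hTG ht))).smul (a / 8)).vadd t).measurableSet
  have hdisj : (T : Set (Euc d)).Pairwise (Function.onFun Disjoint U) := fun s hs t ht hst =>
    (disjoint_hilbertBall hc (hGK (hTG hs)) (hGK (hTG ht)) (hT hs ht hst)).mono
      (hball s hs) (hball t ht)
  have hsum : T.card * (ωd d ^ 2 * a ^ d) ≤
      (64 * Real.exp 4) ^ d * ∫ y in hilbertExpand K G a, htDensity K y :=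
    calc T.card * (ωd d ^ 2 * a ^ d) = ∑ _t ∈ T, ωd d ^ 2 * a ^ d := by
          rw [Finset.sum_const, nsmul_eq_mul]
      _ ≤ ∑ t ∈ T, (64 * Real.exp 4) ^ d * ∫ y in U t, htDensity K y :=
          Finset.sum_le_sum fun t ht => le_setIntegral_htDensity hd hc hb (hGK (hTG ht)) ha ha₁
            (hint.mono_set (hexpand t ht))
      _ = (64 * Real.exp 4) ^ d * ∫ y in ⋃ t ∈ T, U t, htDensity K y := by
          rw [← Finset.mul_sum, integral_biUnion_finset T hmeas hdisj
            fun t ht => hint.mono_set (hexpand t ht)]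
      _ ≤ _ := mul_le_mul_of_nonneg_left (setIntegral_mono_set hint
          (.of_forall htDensity_nonneg) (.of_forall (iUnion₂_subset hexpand))) (by positivity)
  have hω := ωd_pos d
  rw [volH_eq, mul_left_comm _ (ωd d)⁻¹, le_inv_mul_iff₀ hω]
  calc ωd d * (T.card * (ωd d * a ^ d)) = T.card * (ωd d ^ 2 * a ^ d) := by ring
    _ ≤ _ := hsum

lemma exists_isHilbertSeparated_cover (ha : 0 ≤ a) {N : ℕ}
    (hN : ∀ T : Finset (Euc d), ↑T ⊆ G → IsHilbertSeparated K a T → T.card ≤ N) :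
    ∃ T : Finset (Euc d), ↑T ⊆ G ∧ IsHilbertSeparated K a T ∧
      ∀ g ∈ G, ∃ t ∈ T, hilbertDist K t g ≤ a := by
  classical
  set cards : Set ℕ := {n | ∃ T : Finset (Euc d), ↑T ⊆ G ∧ IsHilbertSeparated K a T ∧ T.card = n}
  have hbdd : BddAbove cards := ⟨N, by rintro _ ⟨T, hTG, hT, rfl⟩; exact hN T hTG hT⟩
  have hne : cards.Nonempty := ⟨0, ∅, by simp [IsHilbertSeparated]⟩
  obtain ⟨T, hTG, hT, hcard⟩ := Nat.sSup_mem hne hbdd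
  refine ⟨T, hTG, hT, ?_⟩
  by_contra! hfar
  obtain ⟨g, hg, hgT⟩ := hfar
  have hnotMem : g ∉ T := fun h => (hgT g h).not_ge ((hilbertDist_self K g).trans_le ha)
  have hinsert : IsHilbertSeparated K a (insert g T : Finset (Euc d)) := by
    rw [Finset.coe_insert]
    exact Set.Pairwise.insert hT fun t ht _ =>
      ⟨(hilbertDist_comm K g t).symm ▸ hgT t ht, hgT t ht⟩
  have hle := le_csSup hbdd ⟨insert g T,
    by rw [Finset.coe_insert]; exact insert_subset hg hTG, hinsert, rfl⟩
  rw [Finset.card_insert_of_notMem hnotMem, hcard] at hle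
  exact absurd hle (Nat.not_succ_le_self _)

end Packing

theorem hilbert_cover_volume_bounds_general :
    ∃ c : ℝ, 1 ≤ c ∧ ∀ d : ℕ, d ≠ 0 → ∀ G K : Set (Euc d), IsCompact G → G.Nonempty →
      Convex ℝ K → Bornology.IsBounded K → G ⊆ interior K → ∀ α : ℝ, 0 < α → α ≤ 1 →
        (c ^ d)⁻¹ * (volH K G / (ωd d * α ^ d)) ≤ (hilbertCov K G α : ℝ) ∧
        (hilbertCov K G α : ℝ) ≤
          c ^ d * (volH K (hilbertExpand K G α) / (ωd d * α ^ d)) := by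
  refine ⟨80 * Real.exp 6, by linarith [Real.add_one_le_exp (6 : ℝ)], ?_⟩
  intro d hd G K hG hne hc hb hGK α hα hα₁
  have hpos : 0 < ωd d * α ^ d := mul_pos (ωd_pos d) (pow_pos hα d)
  have hpacking : ∀ T : Finset (Euc d), ↑T ⊆ G → IsHilbertSeparated K α T →
      (T.card : ℝ) ≤ (64 * Real.exp 4) ^ d * (volH K (hilbertExpand K G α) / (ωd d * α ^ d)) := by
    intro T hTG hT
    rw [← mul_div_assoc, le_div_iff₀ hpos]
    exact card_mul_le_volH_hilbertExpand hd hc hb hG hne hGK hα hα₁ hTG hT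
  obtain ⟨T, hTG, hT, hnear⟩ := exists_isHilbertSeparated_cover (K := K) hα.le
    fun T hTG hT => Nat.le_floor (hpacking T hTG hT)
  have hcover := exists_fin_cover_of_finset (hTG.trans hGK) hGK hnear
  constructor
  · obtain ⟨x, hx, hcov⟩ := Nat.sInf_mem (⟨_, hcover⟩ : Set.Nonempty {m : ℕ |
      ∃ x : Fin m → Euc d, (∀ i, x i ∈ interior K) ∧ G ⊆ ⋃ i, hilbertBall K (x i) α})
    rw [inv_mul_le_iff₀ (by positivity), div_le_iff₀ hpos, mul_assoc, mul_left_comm]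
    exact volH_le_of_subset_iUnion_hilbertBall hd hc hb hα hα₁ hx hcov
  · calc (hilbertCov K G α : ℝ) ≤ T.card := mod_cast Nat.sInf_le hcover
      _ ≤ _ := hpacking T hTG hT
      _ ≤ _ := by
        have := div_nonneg (volH_nonneg K (hilbertExpand K G α)) hpos.le
        gcongr <;> norm_num

/-- Hilbert covering numbers vs Holmes–Thompson volume. -/
theorem hilbert_cover_volume_bounds :
    ∃ c : ℝ, 1 ≤ c ∧ ∀ d : ℕ, 2 ≤ d →
      ∀ G K : Set (Euc d), IsConvexBody G → IsConvexBody K → G ⊆ interior K →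
        ∀ α : ℝ, 0 < α → α ≤ 1 →
          (c ^ d)⁻¹ * (volH K G / (ωd d * α ^ d)) ≤ (hilbertCov K G α : ℝ) ∧
          (hilbertCov K G α : ℝ) ≤
            c ^ d * (volH K (hilbertExpand K G α) / (ωd d * α ^ d)) := by
  obtain ⟨c, hc, h⟩ := hilbert_cover_volume_bounds_general
  exact ⟨c, hc, fun d hd G K hG hK => h d (by omega) G K hG.1 (hG.2.2.mono interior_subset)
    hK.2.1 hK.1.isBounded⟩
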